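/- The irregular locus of the commuting variety has codimension at most 4: codim_C C^irr ≤ 4; in fact C^irr has an irreducible component of dimension exactly dim g + rk g − 4 (for a Cartan subalgebra t of g and a root α of g with respect to t, the closure of the union of the adjoint-group translates of Ker α × Ker α ⊆ t × t is such a component). -/

import Mathlib

noncomputable section

namespace CV

variable (k : Type*) [Field k] (V : Type*) [AddCommGroup V] [Module k V] [FiniteDimensional k V]

/-- Coordinates with respect to a chosen basis of `V`. -/
def coordFn (z : V) (i : Module.Free.ChooseBasisIndex k V) : k :=
  (Module.Free.chooseBasis k V).repr z i

/-- Evaluation of a polynomial (in the chosen coordinates) at a point of `V`. -/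
def evalP (F : MvPolynomial (Module.Free.ChooseBasisIndex k V) k) (z : V) : k :=
  MvPolynomial.aeval (coordFn k V z) F

/-- The Zariski topology on `V`: generated by complements of zero sets of polynomial
functions. -/
def zar : TopologicalSpace V :=
  TopologicalSpace.generateFrom
    {U | ∃ F : MvPolynomial (Module.Free.ChooseBasisIndex k V) k, U = {z | evalP k V F z ≠ 0}}

/-- The dimension of a subset of `V`:  the Krull dimension for the topology induced by the
Zariski topology of `V`. -/
def dimSet (S : Set V) : WithBot ℕ∞ :=
  @topologicalKrullDim S (TopologicalSpace.induced Subtype.val (zar k V))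

/-- The differential at `z ∈ V` of a polynomial `F`, as a linear functional on `V`. -/
def diffAt (F : MvPolynomial (Module.Free.ChooseBasisIndex k V) k) (z : V) : V →ₗ[k] k :=
  (Module.Free.chooseBasis k V).constr k fun i => evalP k V (MvPolynomial.pderiv i F) z

/-- The Zariski tangent space at `z` of a subset `S ⊆ V`:  the common kernel of the
differentials at `z` of all polynomial functions vanishing identically on `S`. -/
def tangent (S : Set V) (z : V) : Submodule k V :=
  ⨅ F ∈ {F | ∀ w ∈ S, evalP k V F w = 0}, LinearMap.ker (diffAt k V F z)

end CV

/-- The commuting variety `C = {(x,y) ∈ g × g | [x,y] = 0}`. -/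
def commSet (k : Type*) (g : Type*) [Field k] [LieRing g] [LieAlgebra k g] : Set (g × g) :=
  {p | ⁅p.1, p.2⁆ = 0}

/-- The centralizer `g_x = {y ∈ g | [x,y] = 0}` of an element `x` of a Lie algebra,
as a submodule. -/
def cent (k : Type*) {g : Type*} [Field k] [LieRing g] [LieAlgebra k g] (x : g) :
    Submodule k g := LinearMap.ker (LieAlgebra.ad k g x)

variable (k : Type*) [Field k] [IsAlgClosed k] [CharZero k]
variable (g : Type*) [LieRing g] [LieAlgebra k g] [FiniteDimensional k g]

/-- The irregular locus of the commuting variety:  points `(x,y) ∈ C` with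
`dim (g_x ∩ g_y) > rk g`. -/
def Cirr (t : LieSubalgebra k g) : Set (g × g) :=
  {z ∈ commSet k g | Module.finrank k ↥t < Module.finrank k ↥(cent k z.1 ⊓ cent k z.2)}

/-- The exponential of a (nilpotent) endomorphism of `g`. -/
def expEnd (f : Module.End k g) : Module.End k g :=
  ∑ i ∈ Finset.range (Module.finrank k g + 1), (i.factorial : k)⁻¹ • f ^ i

/-- The adjoint group of `g`, realized as the subgroup of `GL(g)` generated by the
exponentials `exp (ad x)` of the nilpotent inner derivations of `g`. -/
def adjointGroup : Subgroup (Module.End k g)ˣ :=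
  Subgroup.closure {u : (Module.End k g)ˣ |
    ∃ x : g, IsNilpotent (LieAlgebra.ad k g x) ∧
      (u : Module.End k g) = expEnd k g (LieAlgebra.ad k g x)}

/-- The set of translates `G (S) ⊆ g × g` of a subset `S ⊆ g × g` under the (diagonal)
action of the adjoint group `G` of `g`. -/
def adTranslates (S : Set (g × g)) : Set (g × g) :=
  {p | ∃ u ∈ adjointGroup k g, ∃ s ∈ S,
    p = ((u : Module.End k g) s.1, (u : Module.End k g) s.2)}

/-- The root space `g^α` of `α ∈ t*`:  the simultaneous eigenspace
`{x ∈ g | [h,x] = α(h) • x  for all h ∈ t}`. -/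
def eigSp (t : LieSubalgebra k g) (α : Module.Dual k ↥t) : Submodule k g where
  carrier := {x | ∀ h : ↥t, ⁅(h : g), x⁆ = α h • x}
  add_mem' := fun {a b} ha hb h => by rw [lie_add, ha h, hb h, smul_add]
  zero_mem' := fun h => by rw [lie_zero, smul_zero]
  smul_mem' := fun c x hx h => by rw [lie_smul, hx h, smul_comm]

/-- `α ∈ t*` is a root of `g` with respect to `t`. -/
def IsRootOf (t : LieSubalgebra k g) (α : Module.Dual k ↥t) : Prop :=
  α ≠ 0 ∧ eigSp k g t α ≠ ⊥

/-- `Ker α ⊆ t`, viewed as a submodule of `g`. -/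
def kerRoot (t : LieSubalgebra k g) (α : Module.Dual k ↥t) : Submodule k g :=
  Submodule.map t.incl.toLinearMap (LinearMap.ker (α : ↥t →ₗ[k] k))

/-!
Fix a Cartan subalgebra `t` with root vectors `e_β`, and for each root `α` let `Z_α` be the closure
of `G (Ker α × Ker α)`, where `G` is the adjoint group. A pair in `Ker α × Ker α` is centralized by
`t` and by `e_α`, so `Z_α` lies in the closed set `C^irr`.

*Dimension.* The polynomial map `Φ (b, x, y) = u(b) (x, y)`, with `u(b)` the product of the
`exp (b_β ad e_β)` over `β ≠ ± α` and `x, y ∈ Ker α`, has injective differential at a general point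
`(0, c, c)`. Its image therefore has dimension `(dim g - rk g - 2) + 2 (rk g - 1)`. Wherever the
differential is injective, its range contains every `([a, p₁], [a, p₂])` with `(p₁, p₂)` the value
of `Φ`; hence the closure of the image is stable under the flows `exp (s ad a)`, so it is all of
`Z_α`, which is irreducible of dimension `dim g + rk g - 4`.

*Maximality.* Let `U` be the open set of pairs `(x, y)` for which the generalized null space of
`ad x` has dimension at most `rk g + 2`. An irregular pair in `U` can be conjugated so that this
null space is that of an element of `Ker β ⊆ t`, and a computation in the subalgebra `t + sl₂`
attached to `β` puts the pair in `Z_β`. An irreducible subset of `C^irr` containing `Z_α` meets `U`,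
so it lies in some `Z_β`; the dimensions of `Z_α` and `Z_β` agree, so it equals `Z_α`.
-/

/-! ### Polynomial maps -/

section PolynomialMaps

namespace CV

variable {k : Type*} [Field k]
variable {U : Type*} [AddCommGroup U] [Module k U]
variable {V : Type*} [AddCommGroup V] [Module k V]
variable {W : Type*} [AddCommGroup W] [Module k W] [FiniteDimensional k W]
variable {E : Type*} [AddCommGroup E] [Module k E]

variable (k V) in
/-- The coordinate ring of `V`: polynomials in the coordinates used by `evalP`. -/
abbrev CoordRing : Type _ := MvPolynomial (Module.Free.ChooseBasisIndex k V) k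

lemma evalP_add (F G : CoordRing k W) (w : W) :
    evalP k W (F + G) w = evalP k W F w + evalP k W G w :=
  map_add _ _ _

lemma evalP_mul (F G : CoordRing k W) (w : W) :
    evalP k W (F * G) w = evalP k W F w * evalP k W G w :=
  map_mul _ _ _

lemma evalP_smul (c : k) (F : CoordRing k W) (w : W) :
    evalP k W (c • F) w = c * evalP k W F w :=
  map_smul (MvPolynomial.aeval (coordFn k W w)) c F

lemma evalP_C (c : k) (w : W) : evalP k W (MvPolynomial.C c) w = c := by
  simp [evalP]

lemma evalP_X (i : Module.Free.ChooseBasisIndex k W) (w : W) :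
    evalP k W (MvPolynomial.X i) w = coordFn k W w i := by
  simp [evalP]

lemma coordFn_equivFun_symm (c : Module.Free.ChooseBasisIndex k W → k) :
    coordFn k W ((Module.Free.chooseBasis k W).equivFun.symm c) = c :=
  (Module.Free.chooseBasis k W).equivFun.apply_symm_apply c

lemma eq_zero_of_evalP_eq_zero [Infinite k] {F : CoordRing k W}
    (h : ∀ w, evalP k W F w = 0) : F = 0 := by
  refine MvPolynomial.funext fun c => ?_
  have hc := h ((Module.Free.chooseBasis k W).equivFun.symm c)
  rwa [evalP, coordFn_equivFun_symm, MvPolynomial.aeval_eq_eval, ← map_zero (MvPolynomial.eval c)]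
    at hc

variable (k) in
/-- `F : W → V` is a polynomial map: every linear functional of `F` is given by a polynomial
in the coordinates of `W`.  For `V = k` this is the notion of a regular function on `W`. -/
def IsPolyMap (F : W → V) : Prop :=
  ∀ φ : Module.Dual k V, ∃ P : CoordRing k W, ∀ w, evalP k W P w = φ (F w)

lemma isPolyMap_iff_exists_evalP {f : W → k} :
    IsPolyMap k f ↔ ∃ F : CoordRing k W, ∀ w, evalP k W F w = f w := by
  refine ⟨fun hf => hf LinearMap.id, ?_⟩
  rintro ⟨F, hF⟩ φ
  refine ⟨φ 1 • F, fun w => ?_⟩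
  rw [evalP_smul, hF, mul_comm, ← smul_eq_mul, ← map_smul, smul_eq_mul, mul_one]

lemma isPolyMap_evalP (F : CoordRing k W) : IsPolyMap k (evalP k W F) :=
  isPolyMap_iff_exists_evalP.mpr ⟨F, fun _ => rfl⟩

namespace IsPolyMap

lemma const (v : V) : IsPolyMap k (fun _ : W => v) :=
  fun φ => ⟨MvPolynomial.C (φ v), evalP_C _⟩

lemma add {F G : W → V} (hF : IsPolyMap k F) (hG : IsPolyMap k G) :
    IsPolyMap k (fun w => F w + G w) := fun φ => by
  obtain ⟨P, hP⟩ := hF φ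
  obtain ⟨Q, hQ⟩ := hG φ
  exact ⟨P + Q, fun w => by rw [evalP_add, hP, hQ, map_add]⟩

lemma sum {ι : Type*} (s : Finset ι) {F : ι → W → V} (hF : ∀ i ∈ s, IsPolyMap k (F i)) :
    IsPolyMap k (fun w => ∑ i ∈ s, F i w) := by
  classical
  induction s using Finset.induction_on with
  | empty => simpa only [Finset.sum_empty] using const (0 : V)
  | insert i s hi ih =>
    simp only [Finset.sum_insert hi]
    exact (hF i (s.mem_insert_self i)).add (ih fun j hj => hF j (Finset.mem_insert_of_mem hj))

lemma mul {f f' : W → k} (hf : IsPolyMap k f) (hf' : IsPolyMap k f') :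
    IsPolyMap k (fun w => f w * f' w) := by
  obtain ⟨P, hP⟩ := isPolyMap_iff_exists_evalP.mp hf
  obtain ⟨Q, hQ⟩ := isPolyMap_iff_exists_evalP.mp hf'
  exact isPolyMap_iff_exists_evalP.mpr ⟨P * Q, fun w => by rw [evalP_mul, hP, hQ]⟩

lemma prod {ι : Type*} (s : Finset ι) {f : ι → W → k} (hf : ∀ i ∈ s, IsPolyMap k (f i)) :
    IsPolyMap k (fun w => ∏ i ∈ s, f i w) := by
  classical
  induction s using Finset.induction_on with
  | empty => simpa only [Finset.prod_empty] using const (1 : k)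
  | insert i s hi ih =>
    simp only [Finset.prod_insert hi]
    exact (hf i (s.mem_insert_self i)).mul (ih fun j hj => hf j (Finset.mem_insert_of_mem hj))

lemma linearMap_comp (A : V →ₗ[k] U) {F : W → V} (hF : IsPolyMap k F) :
    IsPolyMap k (fun w => A (F w)) :=
  fun φ => hF (φ ∘ₗ A)

lemma evalP_comp [FiniteDimensional k V] (P : CoordRing k V) {F : W → V} (hF : IsPolyMap k F) :
    IsPolyMap k (fun w => evalP k V P (F w)) := by
  induction P using MvPolynomial.induction_on with
  | C c => simpa only [evalP_C] using const c
  | add P Q hP hQ => simpa only [evalP_add] using hP.add hQ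
  | mul_X P i hP =>
    simp only [evalP_mul, evalP_X]
    exact hP.mul (hF.linearMap_comp ((Module.Free.chooseBasis k V).coord i))

lemma comp [FiniteDimensional k V] {G : V → U} {F : W → V} (hG : IsPolyMap k G)
    (hF : IsPolyMap k F) : IsPolyMap k (fun w => G (F w)) := fun φ => by
  obtain ⟨P, hP⟩ := hG φ
  simpa only [hP] using isPolyMap_iff_exists_evalP.mp (hF.evalP_comp P)

lemma prodMk {F : W → V} {G : W → U} (hF : IsPolyMap k F) (hG : IsPolyMap k G) :
    IsPolyMap k (fun w => (F w, G w)) := by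
  simpa only [LinearMap.inl_apply, LinearMap.inr_apply, Prod.mk_add_mk, add_zero, zero_add]
    using (hF.linearMap_comp (LinearMap.inl k V U)).add (hG.linearMap_comp (LinearMap.inr k V U))

lemma linearMap (A : W →ₗ[k] U) : IsPolyMap k (fun w => A w) := fun φ => by
  refine ⟨∑ i, MvPolynomial.C (φ (A (Module.Free.chooseBasis k W i))) * MvPolynomial.X i,
    fun w => ?_⟩
  conv_rhs => rw [← (Module.Free.chooseBasis k W).sum_repr w]
  simp only [map_sum, map_smul, map_mul, evalP, coordFn, MvPolynomial.aeval_C,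
    MvPolynomial.aeval_X, Algebra.algebraMap_self, RingHom.id_apply, smul_eq_mul, mul_comm]

protected lemma id : IsPolyMap k (fun w : W => w) := linearMap LinearMap.id

lemma bilin [FiniteDimensional k V] (B : V →ₗ[k] E →ₗ[k] U) {F : W → V} {G : W → E}
    (hF : IsPolyMap k F) (hG : IsPolyMap k G) : IsPolyMap k (fun w => B (F w) (G w)) := fun φ => by
  let b := Module.Free.chooseBasis k V
  have hsum (w : W) : φ (B (F w) (G w)) = ∑ i, b.coord i (F w) * φ (B (b i) (G w)) := by
    conv_lhs => rw [← b.sum_repr (F w)]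
    simp only [map_sum, map_smul, LinearMap.sum_apply, LinearMap.smul_apply, smul_eq_mul,
      Module.Basis.coord_apply]
  simp only [hsum]
  exact isPolyMap_iff_exists_evalP.mp <| sum _ fun i _ =>
    (hF.linearMap_comp (b.coord i)).mul (hG.linearMap_comp (φ ∘ₗ B (b i)))

lemma smul {f : W → k} {F : W → V} (hf : IsPolyMap k f) (hF : IsPolyMap k F) :
    IsPolyMap k (fun w => f w • F w) :=
  bilin (LinearMap.lsmul k V) hf hF

variable [FiniteDimensional k V]

lemma apply [FiniteDimensional k U] {F : W → V →ₗ[k] U} {G : W → V} (hF : IsPolyMap k F)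
    (hG : IsPolyMap k G) : IsPolyMap k (fun w => F w (G w)) :=
  bilin LinearMap.id hF hG

lemma linearMapComp [FiniteDimensional k U] {F : W → V →ₗ[k] U} {G : W → E →ₗ[k] V}
    (hF : IsPolyMap k F) (hG : IsPolyMap k G) : IsPolyMap k (fun w => F w ∘ₗ G w) :=
  bilin (LinearMap.llcomp k E V U) hF hG

lemma pow {F : W → Module.End k V} (hF : IsPolyMap k F) (n : ℕ) :
    IsPolyMap k (fun w => F w ^ n) := by
  induction n with
  | zero => simpa only [pow_zero] using const (1 : Module.End k V)
  | succ n ih => simpa only [pow_succ] using! ih.linearMapComp hF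

lemma of_apply {F : W → V →ₗ[k] U} (h : ∀ v, IsPolyMap k (fun w => F w v)) : IsPolyMap k F := by
  let b := Module.Free.chooseBasis k V
  have hF : F = fun w => ∑ i, LinearMap.smulRightₗ (b.coord i) (F w (b i)) := by
    funext w
    refine b.ext fun j => ?_
    simp [Finsupp.single_apply, Module.Basis.repr_self]
  rw [hF]
  exact sum _ fun i _ => (h (b i)).linearMap_comp _

lemma det {A : W → Module.End k V} (hA : IsPolyMap k A) :
    IsPolyMap k (fun w => LinearMap.det (A w)) := by
  classical
  let b := Module.Free.chooseBasis k V
  have hdet (w : W) : LinearMap.det (A w) =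
      ∑ σ : Equiv.Perm _, ((Equiv.Perm.sign σ : ℤ) : k) * ∏ i, b.coord (σ i) (A w (b i)) := by
    rw [← LinearMap.det_toMatrix b, Matrix.det_apply']
    simp only [LinearMap.toMatrix_apply, Module.Basis.coord_apply]
  simp only [hdet]
  exact sum _ fun σ _ => (const _).mul <| prod _ fun i _ =>
    hA.linearMap_comp (b.coord (σ i) ∘ₗ LinearMap.applyₗ (b i))

lemma eq_zero_or_eq_zero_of_mul_eq_zero [Infinite k] {f f' : W → k}
    (hf : IsPolyMap k f) (hf' : IsPolyMap k f') (h : ∀ w, f w * f' w = 0) :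
    (∀ w, f w = 0) ∨ ∀ w, f' w = 0 := by
  obtain ⟨P, hP⟩ := isPolyMap_iff_exists_evalP.mp hf
  obtain ⟨Q, hQ⟩ := isPolyMap_iff_exists_evalP.mp hf'
  have hPQ : P * Q = 0 := eq_zero_of_evalP_eq_zero fun w => by rw [evalP_mul, hP, hQ, h]
  have hzero : ∀ w, evalP k W 0 w = 0 := fun _ => map_zero _
  rcases mul_eq_zero.mp hPQ with rfl | rfl
  · exact .inl fun w => by rw [← hP, hzero]
  · exact .inr fun w => by rw [← hQ, hzero]

end IsPolyMap

end CV

end PolynomialMaps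

/-! ### The Zariski topology -/

section ZariskiTopology

open scoped Topology
open Module (finrank)

namespace CV

variable {k : Type*} [Field k]
variable {U : Type*} [AddCommGroup U] [Module k U] [FiniteDimensional k U]
variable {V : Type*} [AddCommGroup V] [Module k V] [FiniteDimensional k V]
variable {W : Type*} [AddCommGroup W] [Module k W] [FiniteDimensional k W]

lemma IsPolyMap.isOpen_ne_zero {f : V → k} (hf : IsPolyMap k f) :
    IsOpen[zar k V] {z | f z ≠ 0} := by
  obtain ⟨F, hF⟩ := isPolyMap_iff_exists_evalP.mp hf
  simp only [← hF]
  exact TopologicalSpace.isOpen_generateFrom_of_mem ⟨F, rfl⟩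

lemma isTopologicalBasis_zar :
    @TopologicalSpace.IsTopologicalBasis V (zar k V)
      {O | ∃ F : CoordRing k V, O = {z | evalP k V F z ≠ 0}} := by
  let _ := zar k V
  refine ⟨?_, ?_, rfl⟩
  · rintro _ ⟨F, rfl⟩ _ ⟨G, rfl⟩ z hz
    have hmul : {z | evalP k V F z ≠ 0} ∩ {z | evalP k V G z ≠ 0} =
        {z | evalP k V (F * G) z ≠ 0} := by
      ext z
      simp only [evalP_mul, Set.mem_inter_iff, Set.mem_ofPred_eq, mul_ne_zero_iff]
    exact ⟨_, ⟨F * G, rfl⟩, hmul ▸ hz, hmul.ge⟩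
  · refine Set.eq_univ_of_forall fun z => ⟨_, ⟨MvPolynomial.C 1, rfl⟩, ?_⟩
    rw [Set.mem_ofPred_eq, evalP_C]
    exact one_ne_zero

lemma mem_closure_zar {S : Set V} {z : V} :
    z ∈ @closure V (zar k V) S ↔
      ∀ F : CoordRing k V, (∀ s ∈ S, evalP k V F s = 0) → evalP k V F z = 0 := by
  let _ := zar k V
  rw [isTopologicalBasis_zar.mem_closure_iff]
  constructor
  · intro h F hF
    by_contra hz
    obtain ⟨s, hs, hsS⟩ := h _ ⟨F, rfl⟩ hz
    exact hs (hF s hsS)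
  · rintro h _ ⟨F, rfl⟩ hz
    by_contra hdisj
    exact hz (h F fun s hs => not_not.mp fun hFs => hdisj ⟨s, hFs, hs⟩)

lemma IsPolyMap.continuous {F : W → V} (hF : IsPolyMap k F) :
    @Continuous W V (zar k W) (zar k V) F := by
  let _ := zar k V
  let _ := zar k W
  refine isTopologicalBasis_zar.continuous_iff.mpr ?_
  rintro _ ⟨P, rfl⟩
  exact (hF.evalP_comp P).isOpen_ne_zero

lemma IsPolyMap.isClosed_eq_zero {F : W → V} (hF : IsPolyMap k F) :
    IsClosed[zar k W] {w | F w = 0} := by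
  let _ := zar k W
  have hinter : {w | F w = 0} = ⋂ φ : Module.Dual k V, {w | φ (F w) ≠ 0}ᶜ := by
    ext w
    simp [Module.forall_dual_apply_eq_zero_iff]
  rw [hinter]
  exact isClosed_iInter fun φ => (hF.linearMap_comp φ).isOpen_ne_zero.isClosed_compl

section Semicontinuity

lemma exists_isOpen_finrank_ker_le {A : W → V →ₗ[k] U} (hA : IsPolyMap k A) (w₀ : W) :
    ∃ O, IsOpen[zar k W] O ∧ w₀ ∈ O ∧
      ∀ w ∈ O, finrank k (LinearMap.ker (A w)) ≤ finrank k (LinearMap.ker (A w₀)) := by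
  obtain ⟨S, hS⟩ := (LinearMap.ker (A w₀)).exists_isCompl
  have hinj : LinearMap.ker (A w₀ ∘ₗ S.subtype) = ⊥ := by
    rw [LinearMap.ker_comp, ← Submodule.disjoint_iff_comap_eq_bot]
    exact hS.symm.disjoint
  obtain ⟨π, hπ⟩ := (A w₀ ∘ₗ S.subtype).exists_leftInverse_of_injective hinj
  refine ⟨{w | LinearMap.det (π ∘ₗ A w ∘ₗ S.subtype) ≠ 0}, ?_, ?_, fun w hw => ?_⟩
  · exact (((IsPolyMap.const π).linearMapComp (hA.linearMapComp (.const _))).det).isOpen_ne_zero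
  · rw [Set.mem_ofPred_eq, hπ, LinearMap.det_id]
    exact one_ne_zero
  · have hcomp : LinearMap.ker (π ∘ₗ A w ∘ₗ S.subtype) = ⊥ := by
      by_contra hne
      exact hw (LinearMap.det_eq_zero_iff_ker_ne_bot.mpr hne)
    have hdisj : Disjoint (LinearMap.ker (A w)) S := by
      rw [disjoint_comm, Submodule.disjoint_iff_comap_eq_bot, ← LinearMap.ker_comp, eq_bot_iff,
        ← hcomp]
      exact LinearMap.ker_le_ker_comp _ _
    have hle := Submodule.finrank_add_finrank_le_of_disjoint hdisj
    have hcompl := Submodule.finrank_add_eq_of_isCompl hS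
    lia

lemma isOpen_finrank_ker_le {A : W → V →ₗ[k] U} (hA : IsPolyMap k A) (n : ℕ) :
    IsOpen[zar k W] {w | finrank k (LinearMap.ker (A w)) ≤ n} := by
  let _ := zar k W
  refine isOpen_iff_forall_mem_open.mpr fun w₀ hw₀ => ?_
  obtain ⟨O, hO, hmem, hle⟩ := exists_isOpen_finrank_ker_le hA w₀
  exact ⟨O, fun w hw => (hle w hw).trans hw₀, hO, hmem⟩

lemma isOpen_injective {A : W → V →ₗ[k] U} (hA : IsPolyMap k A) :
    IsOpen[zar k W] {w | Function.Injective (A w)} := by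
  simpa only [nonpos_iff_eq_zero, Submodule.finrank_eq_zero, LinearMap.ker_eq_bot]
    using isOpen_finrank_ker_le hA 0

lemma isOpen_surjective {A : W → V →ₗ[k] U} (hA : IsPolyMap k A) :
    IsOpen[zar k W] {w | Function.Surjective (A w)} := by
  let _ := zar k W
  refine isOpen_iff_forall_mem_open.mpr fun w₀ hw₀ => ?_
  obtain ⟨O, hO, hmem, hle⟩ := exists_isOpen_finrank_ker_le hA w₀
  refine ⟨O, fun w hw => ?_, hO, hmem⟩
  have hrank := LinearMap.finrank_range_add_finrank_ker (A w)
  have hrank₀ := LinearMap.finrank_range_add_finrank_ker (A w₀)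
  rw [LinearMap.range_eq_top.mpr hw₀, finrank_top] at hrank₀
  have hrange := Submodule.finrank_le (LinearMap.range (A w))
  have := hle w hw
  exact LinearMap.range_eq_top.mp (Submodule.eq_top_of_finrank_eq (by lia))

end Semicontinuity

section Irreducibility

variable [Infinite k]

lemma isIrreducible_univ_zar : @IsIrreducible V (zar k V) Set.univ := by
  let _ := zar k V
  refine ⟨⟨0, trivial⟩, ?_⟩
  rintro O O' hO hO' ⟨x, -, hx⟩ ⟨y, -, hy⟩
  obtain ⟨_, ⟨F, rfl⟩, hxF, hFO⟩ := isTopologicalBasis_zar.exists_subset_of_mem_open hx hO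
  obtain ⟨_, ⟨G, rfl⟩, hyG, hGO'⟩ := isTopologicalBasis_zar.exists_subset_of_mem_open hy hO'
  by_contra hdisj
  have hmul (z : V) : evalP k V F z * evalP k V G z = 0 := by
    by_contra hz
    exact hdisj ⟨z, trivial, hFO (left_ne_zero_of_mul hz), hGO' (right_ne_zero_of_mul hz)⟩
  rcases (isPolyMap_evalP F).eq_zero_or_eq_zero_of_mul_eq_zero (isPolyMap_evalP G) hmul with h | h
  · exact hxF (h x)
  · exact hyG (h y)

lemma IsPolyMap.isIrreducible_range {F : W → V} (hF : IsPolyMap k F) :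
    @IsIrreducible V (zar k V) (Set.range F) := by
  let _ := zar k V
  let _ := zar k W
  rw [← Set.image_univ]
  exact isIrreducible_univ_zar.image F hF.continuous.continuousOn

lemma inter_nonempty_of_isOpen_zar {O O' : Set V} (hO : IsOpen[zar k V] O)
    (hO' : IsOpen[zar k V] O') (hne : O.Nonempty) (hne' : O'.Nonempty) : (O ∩ O').Nonempty := by
  let _ := zar k V
  simpa only [Set.univ_inter] using isIrreducible_univ_zar.isPreirreducible O O' hO hO'
    (by simpa only [Set.univ_inter] using hne) (by simpa only [Set.univ_inter] using hne')

lemma IsPolyMap.eq_zero_of_isOpen {f : W → k} (hf : IsPolyMap k f) {O : Set W}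
    (hO : IsOpen[zar k W] O) (hne : O.Nonempty) (h : ∀ w ∈ O, f w = 0) (w : W) : f w = 0 := by
  by_contra hw
  obtain ⟨w', hw'O, hw'⟩ := inter_nonempty_of_isOpen_zar hO hf.isOpen_ne_zero hne ⟨w, hw⟩
  exact hw' (h w' hw'O)

end Irreducibility

end CV

end ZariskiTopology

/-! ### Differentials of polynomial maps -/

section Differentials

open scoped Topology

namespace CV

variable {k : Type*} [Field k]
variable {U : Type*} [AddCommGroup U] [Module k U]
variable {V : Type*} [AddCommGroup V] [Module k V]
variable {W : Type*} [AddCommGroup W] [Module k W]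

/-- The polynomial curve `γ` has value `p` and velocity `v` at the origin:
`γ s = p + s v + O(s ^ 2)` with a polynomial remainder. -/
def HasJet (γ : k → V) (p v : V) : Prop :=
  ∃ ρ : k → V, IsPolyMap k ρ ∧ ∀ s, γ s = p + s • v + s ^ 2 • ρ s

namespace HasJet

lemma congr {γ γ' : k → V} {p v p' v' : V} (h : HasJet γ p v) (hγ : ∀ s, γ' s = γ s)
    (hp : p' = p) (hv : v' = v) : HasJet γ' p' v' := by
  obtain rfl : γ' = γ := funext hγ
  rwa [hp, hv]

lemma apply_zero {γ : k → V} {p v : V} (h : HasJet γ p v) : γ 0 = p := by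
  obtain ⟨ρ, -, hγ⟩ := h
  simp [hγ]

lemma velocity_unique [Infinite k] {γ : k → V} {p v p' v' : V} (h : HasJet γ p v)
    (h' : HasJet γ p' v') : v = v' := by
  obtain rfl : p = p' := h.apply_zero.symm.trans h'.apply_zero
  obtain ⟨ρ, hρ, hγ⟩ := h
  obtain ⟨ρ', hρ', hγ'⟩ := h'
  rw [← sub_eq_zero, ← Module.forall_dual_apply_eq_zero_iff k]
  intro φ
  have hid : IsPolyMap k (fun s : k => s) := .id
  have hquot : IsPolyMap k fun s => φ (v - v') + s * (φ (ρ s) + -1 * φ (ρ' s)) :=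
    (IsPolyMap.const _).add (hid.mul ((hρ.linearMap_comp φ).add
      ((IsPolyMap.const _).mul (hρ'.linearMap_comp φ))))
  rcases hid.eq_zero_or_eq_zero_of_mul_eq_zero hquot (fun s => by
    have hs := congrArg φ ((hγ s).symm.trans (hγ' s))
    simp only [map_add, map_smul, smul_eq_mul, map_sub] at hs ⊢
    linear_combination hs) with h0 | h0
  · exact absurd (h0 1) one_ne_zero
  · simpa using h0 0

lemma const (p : V) : HasJet (fun _ : k => p) p 0 :=
  ⟨fun _ => 0, .const 0, by simp⟩

lemma line (p v : V) : HasJet (fun s : k => p + s • v) p v :=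
  ⟨fun _ => 0, .const 0, by simp⟩

lemma add {γ γ' : k → V} {p v p' v' : V} (h : HasJet γ p v) (h' : HasJet γ' p' v') :
    HasJet (fun s => γ s + γ' s) (p + p') (v + v') := by
  obtain ⟨ρ, hρ, hγ⟩ := h
  obtain ⟨ρ', hρ', hγ'⟩ := h'
  refine ⟨fun s => ρ s + ρ' s, hρ.add hρ', fun s => ?_⟩
  simp only [hγ, hγ']
  module

lemma sum {ι : Type*} (S : Finset ι) {γ : ι → k → V} {p v : ι → V}
    (h : ∀ i, HasJet (γ i) (p i) (v i)) :
    HasJet (fun s => ∑ i ∈ S, γ i s) (∑ i ∈ S, p i) (∑ i ∈ S, v i) := by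
  classical
  induction S using Finset.induction_on with
  | empty => simpa using HasJet.const (k := k) (0 : V)
  | insert a S ha ih => simpa only [Finset.sum_insert ha] using (h a).add ih

lemma linearMap_comp (A : V →ₗ[k] U) {γ : k → V} {p v : V} (h : HasJet γ p v) :
    HasJet (fun s => A (γ s)) (A p) (A v) := by
  obtain ⟨ρ, hρ, hγ⟩ := h
  exact ⟨fun s => A (ρ s), hρ.linearMap_comp A, fun s => by simp [hγ]⟩

lemma prodMk {γ : k → V} {p v : V} {γ' : k → W} {p' v' : W} (h : HasJet γ p v)
    (h' : HasJet γ' p' v') : HasJet (fun s => (γ s, γ' s)) (p, p') (v, v') := by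
  obtain ⟨ρ, hρ, hγ⟩ := h
  obtain ⟨ρ', hρ', hγ'⟩ := h'
  exact ⟨fun s => (ρ s, ρ' s), hρ.prodMk hρ', fun s => by simp [hγ, hγ']⟩

lemma bilin [FiniteDimensional k V] (B : V →ₗ[k] W →ₗ[k] U) {γ : k → V} {p v : V} {γ' : k → W}
    {p' v' : W} (h : HasJet γ p v) (h' : HasJet γ' p' v') :
    HasJet (fun s => B (γ s) (γ' s)) (B p p') (B v p' + B p v') := by
  obtain ⟨ρ, hρ, hγ⟩ := h
  obtain ⟨ρ', hρ', hγ'⟩ := h'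
  have hid : IsPolyMap k (fun s : k => s) := .id
  refine ⟨fun s => (B p (ρ' s) + B v v' + B (ρ s) p') + (s • (B v (ρ' s) + B (ρ s) v') +
    s • s • B (ρ s) (ρ' s)), ?_, fun s => ?_⟩
  · exact (((IsPolyMap.bilin B (.const p) hρ').add (.const _)).add
      (.bilin B hρ (.const p'))).add
      ((hid.smul ((IsPolyMap.bilin B (.const v) hρ').add (.bilin B hρ (.const v')))).add
        (hid.smul (hid.smul (.bilin B hρ hρ'))))
  · simp only [hγ, hγ', map_add, map_smul, LinearMap.add_apply, LinearMap.smul_apply]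
    module

lemma mul {γ γ' : k → k} {p v p' v' : k} (h : HasJet γ p v) (h' : HasJet γ' p' v') :
    HasJet (fun s => γ s * γ' s) (p * p') (v * p' + p * v') :=
  bilin (LinearMap.mul k k) h h'

lemma smul {γ : k → k} {γ' : k → V} {p v : k} {p' v' : V} (h : HasJet γ p v)
    (h' : HasJet γ' p' v') : HasJet (fun s => γ s • γ' s) (p • p') (v • p' + p • v') :=
  bilin (LinearMap.lsmul k V) h h'

lemma apply [FiniteDimensional k V] [FiniteDimensional k U] {γ : k → V →ₗ[k] U}
    {p v : V →ₗ[k] U} {γ' : k → V} {p' v' : V} (h : HasJet γ p v) (h' : HasJet γ' p' v') :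
    HasJet (fun s => γ s (γ' s)) (p p') (v p' + p v') :=
  bilin LinearMap.id h h'

lemma endMul [FiniteDimensional k V] {γ γ' : k → Module.End k V} {p v p' v' : Module.End k V}
    (h : HasJet γ p v) (h' : HasJet γ' p' v') :
    HasJet (fun s => γ s * γ' s) (p * p') (v * p' + p * v') :=
  bilin (LinearMap.llcomp k V V V) h h'

end HasJet

section EvalP

variable [FiniteDimensional k V]

lemma diffAt_apply (F : CoordRing k V) (z v : V) :
    diffAt k V F z v = ∑ i, coordFn k V v i * evalP k V (MvPolynomial.pderiv i F) z := by
  simp [diffAt, Module.Basis.constr_apply_fintype, coordFn]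

lemma diffAt_C (c : k) (z v : V) : diffAt k V (MvPolynomial.C c) z v = 0 := by
  simp [diffAt_apply, evalP]

lemma diffAt_X (i : Module.Free.ChooseBasisIndex k V) (z v : V) :
    diffAt k V (MvPolynomial.X i) z v = coordFn k V v i := by
  classical
  simp [diffAt_apply, evalP, MvPolynomial.pderiv_X, Pi.single_apply, apply_ite]

lemma diffAt_add (F G : CoordRing k V) (z v : V) :
    diffAt k V (F + G) z v = diffAt k V F z v + diffAt k V G z v := by
  simp [diffAt_apply, evalP_add, mul_add, Finset.sum_add_distrib]

lemma diffAt_mul (F G : CoordRing k V) (z v : V) :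
    diffAt k V (F * G) z v =
      diffAt k V F z v * evalP k V G z + evalP k V F z * diffAt k V G z v := by
  simp only [diffAt_apply, Derivation.leibniz, smul_eq_mul, evalP_add, evalP_mul, Finset.sum_mul,
    Finset.mul_sum, ← Finset.sum_add_distrib]
  exact Finset.sum_congr rfl fun i _ => by ring

lemma HasJet.evalP_comp (F : CoordRing k V) {γ : k → V} {p v : V} (h : HasJet γ p v) :
    HasJet (fun s => evalP k V F (γ s)) (evalP k V F p) (diffAt k V F p v) := by
  induction F using MvPolynomial.induction_on with
  | C c => exact (HasJet.const c).congr (fun _ => evalP_C _ _) (evalP_C _ _) (diffAt_C _ _ _)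
  | add F G hF hG =>
    exact (hF.add hG).congr (fun _ => evalP_add _ _ _) (evalP_add _ _ _) (diffAt_add _ _ _ _)
  | mul_X F i hF =>
    have hcoord := h.linearMap_comp ((Module.Free.chooseBasis k V).coord i)
    refine (hF.mul hcoord).congr (fun s => ?_) ?_ ?_
    · rw [evalP_mul, evalP_X, coordFn, Module.Basis.coord_apply]
    · rw [evalP_mul, evalP_X, coordFn, Module.Basis.coord_apply]
    · simp only [diffAt_mul, evalP_X, diffAt_X, coordFn, Module.Basis.coord_apply]

lemma isPolyMap_diffAt [FiniteDimensional k W] {γ ν : W → V} (F : CoordRing k V)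
    (hγ : IsPolyMap k γ) (hν : IsPolyMap k ν) :
    IsPolyMap k (fun w => diffAt k V F (γ w) (ν w)) := by
  simp only [diffAt_apply]
  exact .sum _ fun i _ =>
    (hν.linearMap_comp ((Module.Free.chooseBasis k V).coord i)).mul (hγ.evalP_comp _)

end EvalP

/-- `DF` is a differential of `F`: it transports the jets of polynomial curves. -/
def HasDifferential (F : W → V) (DF : W → W →ₗ[k] V) : Prop :=
  ∀ ⦃γ : k → W⦄ ⦃w w' : W⦄, HasJet γ w w' → HasJet (fun s => F (γ s)) (F w) (DF w w')

lemma IsPolyMap.exists_hasDifferential [FiniteDimensional k V] [FiniteDimensional k W]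
    {F : W → V} (hF : IsPolyMap k F) :
    ∃ DF : W → W →ₗ[k] V, IsPolyMap k DF ∧ HasDifferential F DF := by
  let b := Module.Free.chooseBasis k V
  choose P hP using fun i => hF (b.coord i)
  have hsum (w : W) : F w = ∑ i, evalP k W (P i) w • b i := by
    simp only [hP, Module.Basis.coord_apply, b.sum_repr]
  refine ⟨fun w => ∑ i, (diffAt k W (P i) w).smulRight (b i), ?_, fun γ w w' h => ?_⟩
  · refine .of_apply fun v => ?_
    simp only [LinearMap.sum_apply, LinearMap.smulRight_apply]
    exact .sum _ fun i _ => (isPolyMap_diffAt (P i) .id (.const v)).smul (.const _)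
  · refine (HasJet.sum Finset.univ fun i => (h.evalP_comp (P i)).smul (.const (b i))).congr
      (fun s => hsum _) (hsum w) ?_
    simp only [LinearMap.sum_apply, LinearMap.smulRight_apply, smul_zero, add_zero]

section IntegralCurves

lemma IsPolyMap.exists_polynomial {f : k → k} (hf : IsPolyMap k f) :
    ∃ P : Polynomial k, ∀ s, P.eval s = f s := by
  obtain ⟨F, hF⟩ := isPolyMap_iff_exists_evalP.mp hf
  simp only [← hF]
  clear hF
  induction F using MvPolynomial.induction_on with
  | C c => exact ⟨.C c, fun s => by rw [Polynomial.eval_C, evalP_C]⟩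
  | add F G ihF ihG =>
    obtain ⟨P, hP⟩ := ihF
    obtain ⟨Q, hQ⟩ := ihG
    exact ⟨P + Q, fun s => by rw [Polynomial.eval_add, hP, hQ, evalP_add]⟩
  | mul_X F i ihF =>
    obtain ⟨P, hP⟩ := ihF
    refine ⟨P * (.X * .C (coordFn k k 1 i)), fun s => ?_⟩
    have hcoord : coordFn k k s i = s * coordFn k k 1 i := by
      simp only [coordFn]
      rw [← smul_eq_mul s, ← Finsupp.smul_apply, ← map_smul, smul_eq_mul, mul_one]
    rw [evalP_mul, evalP_X, hcoord, Polynomial.eval_mul, hP, Polynomial.eval_mul,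
      Polynomial.eval_X, Polynomial.eval_C]

lemma hasJet_polynomial (P : Polynomial k) (s : k) :
    HasJet (fun s' => P.eval (s + s')) (P.eval s) (P.derivative.eval s) := by
  have hshift : HasJet (fun s' : k => s + s') s 1 := (HasJet.line s 1).congr (by simp) rfl rfl
  induction P using Polynomial.induction_on with
  | C c => exact (HasJet.const c).congr (by simp) (by simp) (by simp)
  | add P Q hP hQ => exact (hP.add hQ).congr (by simp) (by simp) (by simp)
  | monomial n c ih =>
    refine (ih.mul hshift).congr (fun s' => ?_) ?_ ?_
    · simp [pow_succ, mul_assoc]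
    · simp [pow_succ, mul_assoc]
    · simp only [← mul_assoc, pow_succ, Polynomial.derivative_mul, Polynomial.derivative_X]; simp

variable [CharZero k]

lemma eq_zero_of_hasJet_succ {h : ℕ → k → k} (hpoly : ∀ j, IsPolyMap k (h j))
    (hjet : ∀ j s, HasJet (fun s' => h j (s + s')) (h j s) (h (j + 1) s))
    (h0 : ∀ j, h j 0 = 0) (s : k) : h 0 s = 0 := by
  choose P hP using fun j => (hpoly j).exists_polynomial
  have hderiv (j : ℕ) : (P j).derivative = P (j + 1) := by
    refine Polynomial.funext fun s => ?_
    have hs := hjet j s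
    simp only [← hP] at hs
    exact (hasJet_polynomial (P j) s).velocity_unique hs
  have hiter (j : ℕ) : Polynomial.derivative^[j] (P 0) = P j := by
    induction j with
    | zero => rfl
    | succ j ih => rw [Function.iterate_succ_apply', ih, hderiv]
  have hzero : P 0 = 0 := by
    ext j
    have hj := Polynomial.coeff_iterate_derivative (P 0) (m := 0) (k := j)
    rw [hiter, Polynomial.coeff_zero_eq_eval_zero, hP, h0, zero_add, Nat.descFactorial_self] at hj
    exact (smul_eq_zero.mp hj.symm).resolve_left j.factorial_ne_zero
  rw [← hP, hzero, Polynomial.eval_zero]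

variable [FiniteDimensional k V] [FiniteDimensional k W]

-- The derivation `f ↦ df(A)` preserves the ideal of `F(W)`, so along an integral curve of `A`
-- all derivatives of an element of that ideal vanish at the origin.
lemma mem_closure_range_of_integralCurve {F : W → V} {DF : W → W →ₗ[k] V}
    (hF : IsPolyMap k F) (hDF : HasDifferential F DF) {A : V → V} (hA : IsPolyMap k A)
    {O : Set W} (hO : IsOpen[zar k W] O) (hne : O.Nonempty)
    (htangent : ∀ w ∈ O, A (F w) ∈ LinearMap.range (DF w))
    {Γ : k → V} (hΓ : IsPolyMap k Γ) (hΓA : ∀ s, HasJet (fun s' => Γ (s + s')) (Γ s) (A (Γ s)))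
    (hΓ0 : Γ 0 ∈ @closure V (zar k V) (Set.range F)) (s : k) :
    Γ s ∈ @closure V (zar k V) (Set.range F) := by
  simp only [mem_closure_zar, Set.forall_mem_range] at hΓ0 ⊢
  choose D hD using fun f : CoordRing k V =>
    isPolyMap_iff_exists_evalP.mp (isPolyMap_diffAt f .id hA)
  have hDvanish (f : CoordRing k V) (hf : ∀ w, evalP k V f (F w) = 0) (w : W) :
      evalP k V (D f) (F w) = 0 := by
    refine (hF.evalP_comp (D f)).eq_zero_of_isOpen hO hne (fun w hw => ?_) w
    obtain ⟨w', hw'⟩ := htangent w hw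
    have hjet := (hDF (.line w w')).evalP_comp f
    rw [hD, ← hw']
    exact hjet.velocity_unique ((HasJet.const 0).congr (fun s => hf _) (hf w) rfl)
  intro f hf
  have hiter (j : ℕ) : ∀ w, evalP k V (D^[j] f) (F w) = 0 := by
    induction j with
    | zero => exact hf
    | succ j ih => simpa only [Function.iterate_succ_apply'] using hDvanish _ ih
  refine eq_zero_of_hasJet_succ (h := fun j s => evalP k V (D^[j] f) (Γ s))
    (fun j => hΓ.evalP_comp _) (fun j s => ?_) (fun j => hΓ0 _ (hiter j)) s
  exact ((hΓA s).evalP_comp (D^[j] f)).congr (fun _ => rfl) rfl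
    (by rw [Function.iterate_succ_apply', hD])

lemma closure_range_eq_univ_of_surjective {F : W → V} {DF : W → W →ₗ[k] V}
    (hF : IsPolyMap k F) (hDF : HasDifferential F DF) (hDFpoly : IsPolyMap k DF) {w₀ : W}
    (hsurj : Function.Surjective (DF w₀)) : @closure V (zar k V) (Set.range F) = Set.univ := by
  refine Set.eq_univ_of_forall fun z => ?_
  have hline : IsPolyMap k (fun s : k => F w₀ + s • (z - F w₀)) :=
    (IsPolyMap.const _).add (IsPolyMap.id.smul (.const _))
  have hstart : F w₀ + (0 : k) • (z - F w₀) ∈ @closure V (zar k V) (Set.range F) := by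
    rw [zero_smul, add_zero]
    exact @subset_closure _ (zar k V) _ _ ⟨w₀, rfl⟩
  simpa using mem_closure_range_of_integralCurve hF hDF (.const (z - F w₀))
    (isOpen_surjective hDFpoly) ⟨w₀, hsurj⟩ (fun w hw => hw _) hline
    (fun s => (HasJet.line (F w₀ + s • (z - F w₀)) (z - F w₀)).congr (fun _ => by module) rfl rfl)
    hstart 1

end IntegralCurves

end CV

end Differentials

/-! ### Dimension -/

section Dimension

open scoped Topology
open Module (finrank)

namespace CV

lemma ringKrullDim_eq_of_isIntegral {R A : Type*} [CommRing R] [CommRing A] [IsDomain A]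
    [Algebra R A] [Algebra.IsIntegral R A] [FaithfulSMul R A] :
    ringKrullDim A = ringKrullDim R := by
  refine le_antisymm ?_ (iSup_le fun l => ?_)
  · exact Order.krullDim_le_of_strictMono (PrimeSpectrum.comap (algebraMap R A))
      fun P Q hPQ => Ideal.IsIntegral.comap_lt_comap (I := P.asIdeal) (J := Q.asIdeal) hPQ
  · obtain ⟨Q, -, _, hQ⟩ := Ideal.exists_ideal_over_prime_of_isIntegral_of_isPrime
      l.head.asIdeal (⊥ : Ideal A) (by
        rw [Ideal.comap_bot_of_injective _ (FaithfulSMul.algebraMap_injective R A)]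
        exact bot_le)
    have : Q.LiesOver l.head.asIdeal := ⟨hQ.symm⟩
    obtain ⟨L, hL, -⟩ := Ideal.exists_ltSeries_of_hasGoingUp l Q
    exact hL ▸ Order.LTSeries.length_le_krullDim L

lemma ringKrullDim_eq_of_trdeg_eq {k A : Type*} [Field k] [CommRing A] [IsDomain A] [Algebra k A]
    [Algebra.FiniteType k A] {n : ℕ} (h : Algebra.trdeg k A = n) : ringKrullDim A = n := by
  obtain ⟨s, φ, hφ, hφ_int⟩ := exists_integral_inj_algHom_of_fg k A
  let _ : Algebra (MvPolynomial (Fin s) k) A := φ.toRingHom.toAlgebra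
  have : IsScalarTower k (MvPolynomial (Fin s) k) A :=
    .of_algebraMap_eq fun x => (φ.commutes x).symm
  have : FaithfulSMul (MvPolynomial (Fin s) k) A :=
    (faithfulSMul_iff_algebraMap_injective _ _).mpr hφ
  have : Algebra.IsIntegral (MvPolynomial (Fin s) k) A := ⟨hφ_int⟩
  have htower := lift_trdeg_add_eq k (MvPolynomial (Fin s) k) A
  rw [trdeg_eq_zero (R := MvPolynomial (Fin s) k), MvPolynomial.trdeg_of_isDomain, h]
    at htower
  obtain rfl : s = n := by simpa using htower
  rw [ringKrullDim_eq_of_isIntegral (R := MvPolynomial (Fin s) k),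
    MvPolynomial.ringKrullDim_of_isNoetherianRing, ringKrullDim_eq_zero_of_field]
  simp

lemma trdeg_eq_of_injective {k A : Type*} [Field k] [CommRing A] [Algebra k A]
    {σ : Type*} [Fintype σ] {f : MvPolynomial σ k →ₐ[k] A} (hf : Function.Injective f)
    {f' : A →ₐ[k] MvPolynomial σ k} (hf' : Function.Injective f') :
    Algebra.trdeg k A = Fintype.card σ := by
  have hle := lift_trdeg_le_of_injective f hf
  have hge := lift_trdeg_le_of_injective f' hf'
  rw [MvPolynomial.trdeg_of_isDomain, Cardinal.mk_fintype] at hle hge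
  simp only [Cardinal.lift_natCast] at hle hge
  exact Cardinal.lift_eq_nat_iff.mp (hge.antisymm hle)

lemma isIrreducible_preimage_val {X : Type*} [TopologicalSpace X] {Z T : Set X}
    (hT : IsIrreducible T) (hTZ : T ⊆ Z) : IsIrreducible (Subtype.val ⁻¹' T : Set Z) := by
  obtain ⟨x, hx⟩ := hT.nonempty
  refine ⟨⟨⟨x, hTZ hx⟩, hx⟩, ?_⟩
  rintro _ _ ⟨O, hO, rfl⟩ ⟨O', hO', rfl⟩ ⟨y, hyT, hy⟩ ⟨y', hy'T, hy'⟩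
  obtain ⟨z, hz, hzO⟩ := hT.isPreirreducible O O' hO hO' ⟨y, hyT, hy⟩ ⟨y', hy'T, hy'⟩
  exact ⟨⟨z, hTZ hz⟩, hz, hzO⟩

variable {k : Type*} [Field k]
variable {V : Type*} [AddCommGroup V] [Module k V] [FiniteDimensional k V]
variable {W : Type*} [AddCommGroup W] [Module k W] [FiniteDimensional k W]

variable (k) in
/-- The ideal of the polynomial functions on `V` vanishing on `S`, the counterpart of
`MvPolynomial.vanishingIdeal` in the chosen coordinates. -/
def vanishingIdeal (S : Set V) : Ideal (CoordRing k V) where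
  carrier := {f | ∀ z ∈ S, evalP k V f z = 0}
  add_mem' hf hf' z hz := by rw [evalP_add, hf z hz, hf' z hz, add_zero]
  zero_mem' _ _ := map_zero _
  smul_mem' c f hf z hz := by rw [smul_eq_mul, evalP_mul, hf z hz, mul_zero]

/-- The subset of `V` cut out by an ideal of polynomial functions, the counterpart of
`MvPolynomial.zeroLocus` in the chosen coordinates. -/
def zeroLocus (I : Ideal (CoordRing k V)) : Set V :=
  {z | ∀ f ∈ I, evalP k V f z = 0}

lemma mem_vanishingIdeal {S : Set V} {f : CoordRing k V} :
    f ∈ vanishingIdeal k S ↔ ∀ z ∈ S, evalP k V f z = 0 := Iff.rfl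

lemma vanishingIdeal_anti {S T : Set V} (h : S ⊆ T) :
    vanishingIdeal k T ≤ vanishingIdeal k S := fun _ hf z hz => hf z (h hz)

lemma zeroLocus_anti {I J : Ideal (CoordRing k V)} (h : I ≤ J) :
    zeroLocus J ⊆ zeroLocus I := fun _ hz f hf => hz f (h hf)

lemma zeroLocus_vanishingIdeal (S : Set V) :
    zeroLocus (vanishingIdeal k S) = @closure V (zar k V) S :=
  Set.ext fun _ => mem_closure_zar.symm

lemma vanishingIdeal_closure (S : Set V) :
    vanishingIdeal k (@closure V (zar k V) S) = vanishingIdeal k S :=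
  le_antisymm (vanishingIdeal_anti (@subset_closure _ (zar k V) S))
    fun f hf _ hz => mem_closure_zar.mp hz f hf

lemma zeroLocus_subset_of_isClosed {Z : Set V} (hZ : IsClosed[zar k V] Z)
    {I : Ideal (CoordRing k V)} (h : vanishingIdeal k Z ≤ I) : zeroLocus I ⊆ Z := by
  let _ := zar k V
  exact (zeroLocus_anti h).trans (zeroLocus_vanishingIdeal (k := k) Z ▸ hZ.closure_eq.subset)

lemma isClosed_zeroLocus (I : Ideal (CoordRing k V)) : IsClosed[zar k V] (zeroLocus I) := by
  let _ := zar k V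
  have hinter : zeroLocus I = ⋂ f ∈ I, {z | evalP k V f z = 0} := by ext z; simp [zeroLocus]
  rw [hinter]
  exact isClosed_biInter fun f _ => (isPolyMap_evalP f).isClosed_eq_zero

lemma vanishingIdeal_isPrime {S : Set V} (hS : @IsIrreducible V (zar k V) S) :
    (vanishingIdeal k S).IsPrime := by
  let _ := zar k V
  refine ⟨(Ideal.ne_top_iff_one _).mpr fun hone => ?_, fun {f f'} hmul => ?_⟩
  · obtain ⟨z, hz⟩ := hS.nonempty
    simpa [evalP] using hone z hz
  · by_contra! hcon
    simp only [mem_vanishingIdeal, not_forall] at hcon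
    obtain ⟨⟨x, hx, hfx⟩, y, hy, hfy⟩ := hcon
    obtain ⟨z, hz, hfz, hf'z⟩ := hS.isPreirreducible _ _ (isPolyMap_evalP f).isOpen_ne_zero
      (isPolyMap_evalP f').isOpen_ne_zero ⟨x, hx, hfx⟩ ⟨y, hy, hfy⟩
    exact mul_ne_zero hfz hf'z (evalP_mul f f' z ▸ hmul z hz)

lemma dimSet_mono {S T : Set V} (h : S ⊆ T) : dimSet k V S ≤ dimSet k V T := by
  let _ := zar k V
  exact (Topology.IsEmbedding.inclusion h).isInducing.topologicalKrullDim_le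

section Nullstellensatz

variable [IsAlgClosed k]

lemma vanishingIdeal_zeroLocus (P : Ideal (CoordRing k V)) [P.IsPrime] :
    vanishingIdeal k (zeroLocus P) = P := by
  rw [← MvPolynomial.IsPrime.vanishingIdeal_zeroLocus (K := k) P]
  ext f
  rw [mem_vanishingIdeal, MvPolynomial.mem_vanishingIdeal_iff,
    MvPolynomial.IsPrime.vanishingIdeal_zeroLocus (K := k) P]
  refine ⟨fun hf c hc => ?_, fun hf z hz => hf (coordFn k V z) hz⟩
  simpa only [evalP, coordFn_equivFun_symm] using
    hf ((Module.Free.chooseBasis k V).equivFun.symm c) fun q hq => by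
      simpa only [evalP, coordFn_equivFun_symm] using hc q hq

lemma isIrreducible_zeroLocus (P : Ideal (CoordRing k V)) [hP : P.IsPrime] :
    @IsIrreducible V (zar k V) (zeroLocus P) := by
  let _ := zar k V
  refine ⟨Set.nonempty_iff_ne_empty.mpr fun hempty => hP.ne_top ?_, ?_⟩
  · rw [← vanishingIdeal_zeroLocus P, hempty, Ideal.eq_top_iff_one]
    exact fun z hz => absurd hz (Set.notMem_empty z)
  · rintro O O' hO hO' ⟨x, hxP, hx⟩ ⟨y, hyP, hy⟩
    obtain ⟨_, ⟨f, rfl⟩, hxf, hfO⟩ := isTopologicalBasis_zar.exists_subset_of_mem_open hx hO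
    obtain ⟨_, ⟨f', rfl⟩, hyf', hf'O'⟩ := isTopologicalBasis_zar.exists_subset_of_mem_open hy hO'
    have hmul : f * f' ∉ P := fun h =>
      (hP.mem_or_mem h).elim (fun hf => hxf (hxP f hf)) fun hf' => hyf' (hyP f' hf')
    rw [← vanishingIdeal_zeroLocus P, mem_vanishingIdeal] at hmul
    push Not at hmul
    obtain ⟨z, hz, hne⟩ := hmul
    rw [evalP_mul] at hne
    exact ⟨z, hz, hfO (left_ne_zero_of_mul hne), hf'O' (right_ne_zero_of_mul hne)⟩

/-- The irreducible closed subsets of a closed `Z ⊆ V` correspond, with inclusions reversed, to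
the prime ideals containing the ideal of `Z`. -/
def irreducibleClosedsOrderIso {Z : Set V} (hZ : IsClosed[zar k V] Z) :
    @TopologicalSpace.IrreducibleCloseds Z (TopologicalSpace.induced Subtype.val (zar k V)) ≃o
      (PrimeSpectrum.zeroLocus (vanishingIdeal k Z : Set (CoordRing k V)))ᵒᵈ :=
  let _ := zar k V
  have hsub (P : PrimeSpectrum.zeroLocus (vanishingIdeal k Z : Set (CoordRing k V))) :
      zeroLocus P.1.asIdeal ⊆ Z := zeroLocus_subset_of_isClosed hZ P.2
  Equiv.toOrderIso
    { toFun T := .toDual ⟨⟨vanishingIdeal k (Subtype.val '' (T : Set Z)), vanishingIdeal_isPrime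
        (T.isIrreducible.image _ continuous_subtype_val.continuousOn)⟩,
        vanishingIdeal_anti (Subtype.coe_image_subset _ _)⟩
      invFun P :=
        { carrier := Subtype.val ⁻¹' zeroLocus (OrderDual.ofDual P).1.asIdeal
          isIrreducible' := isIrreducible_preimage_val (isIrreducible_zeroLocus _) (hsub _)
          isClosed' := (isClosed_zeroLocus _).preimage continuous_subtype_val }
      left_inv T := TopologicalSpace.IrreducibleCloseds.ext <| by
        change Subtype.val ⁻¹' zeroLocus (vanishingIdeal k (Subtype.val '' (T : Set Z))) = _
        rw [zeroLocus_vanishingIdeal,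
          ← Topology.IsInducing.subtypeVal.closure_eq_preimage_closure_image, T.isClosed.closure_eq]
      right_inv P := Subtype.ext <| PrimeSpectrum.ext <| by
        change vanishingIdeal k (Subtype.val '' (Subtype.val ⁻¹' zeroLocus _)) = _
        rw [Subtype.image_preimage_coe, Set.inter_eq_right.mpr (hsub _), vanishingIdeal_zeroLocus]
        rfl }
    (fun _ _ h => vanishingIdeal_anti (Set.image_mono h))
    (fun _ _ h => Set.preimage_mono (f := Subtype.val) (zeroLocus_anti h))

lemma dimSet_eq_ringKrullDim {Z : Set V} (hZ : IsClosed[zar k V] Z) :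
    dimSet k V Z = ringKrullDim (CoordRing k V ⧸ vanishingIdeal k Z) := by
  rw [ringKrullDim_quotient, ← Order.krullDim_orderDual]
  exact Order.krullDim_eq_of_orderIso (irreducibleClosedsOrderIso hZ)

lemma eq_of_subset_of_dimSet_eq {Z₁ Z₂ : Set V} (h₁ : IsClosed[zar k V] Z₁)
    (h₂ : IsClosed[zar k V] Z₂) (hirr : @IsIrreducible V (zar k V) Z₂) (hsub : Z₁ ⊆ Z₂) {n : ℕ}
    (hdim₁ : dimSet k V Z₁ = n) (hdim₂ : dimSet k V Z₂ = n) : Z₁ = Z₂ := by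
  let _ := zar k V
  have := vanishingIdeal_isPrime hirr
  have hle : vanishingIdeal k Z₂ ≤ vanishingIdeal k Z₁ := vanishingIdeal_anti hsub
  suffices hge : vanishingIdeal k Z₁ ≤ vanishingIdeal k Z₂ by
    rw [← h₁.closure_eq, ← h₂.closure_eq, ← zeroLocus_vanishingIdeal, ← zeroLocus_vanishingIdeal,
      hge.antisymm hle]
  by_contra hnot
  obtain ⟨f, hf₁, hf₂⟩ := SetLike.not_le_iff_exists.mp hnot
  have hdrop := ringKrullDim_succ_le_of_surjective (Ideal.Quotient.factor hle)
    (Ideal.Quotient.factor_surjective hle) (r := Ideal.Quotient.mk _ f)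
    (mem_nonZeroDivisors_of_ne_zero fun h => hf₂ (Ideal.Quotient.eq_zero_iff_mem.mp h))
    (by rwa [Ideal.Quotient.factor_mk, Ideal.Quotient.eq_zero_iff_mem])
  rw [← dimSet_eq_ringKrullDim h₁, ← dimSet_eq_ringKrullDim h₂, hdim₁, hdim₂] at hdrop
  have : n + 1 ≤ n := by exact_mod_cast hdrop
  lia

end Nullstellensatz

lemma IsPolyMap.exists_comap {F : W → V} (hF : IsPolyMap k F) :
    ∃ Ψ : CoordRing k V →ₐ[k] CoordRing k W, ∀ f w, evalP k W (Ψ f) w = evalP k V f (F w) := by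
  choose G hG using fun i => hF ((Module.Free.chooseBasis k V).coord i)
  refine ⟨MvPolynomial.aeval G, fun f w => ?_⟩
  have hcomp : (MvPolynomial.aeval (coordFn k W w)).comp (MvPolynomial.aeval G) =
      (MvPolynomial.aeval (coordFn k V (F w)) : CoordRing k V →ₐ[k] k) := by
    refine MvPolynomial.algHom_ext fun i => ?_
    simp only [AlgHom.comp_apply, MvPolynomial.aeval_X]
    exact hG i w
  exact DFunLike.congr_fun hcomp f

lemma ker_comap_eq_vanishingIdeal_range [Infinite k] {F : W → V}
    {Ψ : CoordRing k V →ₐ[k] CoordRing k W}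
    (hΨ : ∀ f w, evalP k W (Ψ f) w = evalP k V f (F w)) :
    RingHom.ker Ψ = vanishingIdeal k (Set.range F) := by
  ext f
  rw [RingHom.mem_ker, mem_vanishingIdeal, Set.forall_mem_range]
  refine ⟨fun h w => ?_, fun h => eq_zero_of_evalP_eq_zero fun w => by rw [hΨ, h]⟩
  rw [← hΨ, h]
  exact map_zero _

-- A left inverse `L` of the differential makes `L ∘ F` dominant, so that the coordinate ring of
-- the image lies between two polynomial rings in `dim W` variables.
lemma dimSet_closure_range [IsAlgClosed k] [CharZero k] {F : W → V} {DF : W → W →ₗ[k] V}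
    (hF : IsPolyMap k F) (hDF : HasDifferential F DF) (hDFpoly : IsPolyMap k DF) {w₀ : W}
    (hinj : Function.Injective (DF w₀)) :
    dimSet k V (@closure V (zar k V) (Set.range F)) = finrank k W := by
  rw [dimSet_eq_ringKrullDim (@isClosed_closure _ (zar k V) _), vanishingIdeal_closure]
  have := vanishingIdeal_isPrime hF.isIrreducible_range
  obtain ⟨Ψ, hΨ⟩ := hF.exists_comap
  obtain ⟨L, hL⟩ := (DF w₀).exists_leftInverse_of_injective (LinearMap.ker_eq_bot.mpr hinj)
  obtain ⟨M, hM⟩ := (IsPolyMap.linearMap L).exists_comap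
  have hker := ker_comap_eq_vanishingIdeal_range hΨ
  rw [Module.finrank_eq_card_chooseBasisIndex]
  refine ringKrullDim_eq_of_trdeg_eq (k := k) (trdeg_eq_of_injective
    (f := (Ideal.Quotient.mkₐ k (vanishingIdeal k (Set.range F))).comp M) ?_
    (f' := Ideal.Quotient.liftₐ (vanishingIdeal k (Set.range F)) Ψ
      fun f hf => RingHom.mem_ker.mp (hker ▸ hf)) ?_)
  · refine (injective_iff_map_eq_zero _).mpr fun q hq => eq_zero_of_evalP_eq_zero fun w => ?_
    have hMq : M q ∈ vanishingIdeal k (Set.range F) := Ideal.Quotient.eq_zero_iff_mem.mp hq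
    have hdom : @closure W (zar k W) (Set.range fun w => L (F w)) = Set.univ :=
      closure_range_eq_univ_of_surjective (hF.linearMap_comp L) (DF := fun w => L ∘ₗ DF w)
        (fun _ _ _ h => (hDF h).linearMap_comp L) ((IsPolyMap.const L).linearMapComp hDFpoly)
        (w₀ := w₀) fun w => ⟨w, DFunLike.congr_fun hL w⟩
    refine mem_closure_zar.mp (hdom ▸ Set.mem_univ w) q ?_
    rintro _ ⟨w, rfl⟩
    rw [← hM]
    exact hMq _ ⟨w, rfl⟩
  · refine (injective_iff_map_eq_zero _).mpr fun a ha => ?_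
    obtain ⟨f, rfl⟩ := Ideal.Quotient.mk_surjective a
    rw [Ideal.Quotient.eq_zero_iff_mem, ← hker]
    exact ha

end CV

end Dimension

/-! ### Images of polynomial maps -/

section Chevalley

open scoped Topology

namespace CV

lemma mem_nhds_bot_or_compl_mem_nhds_bot {R : Type*} [CommRing R] [IsDomain R]
    {s : Set (PrimeSpectrum R)} (hs : Topology.IsConstructible s) :
    s ∈ 𝓝 (⊥ : PrimeSpectrum R) ∨ sᶜ ∈ 𝓝 (⊥ : PrimeSpectrum R) := by
  induction hs using Topology.IsConstructible.empty_union_induction with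
  | open_retrocompact O hO _ =>
    rcases O.eq_empty_or_nonempty with rfl | ⟨x, hx⟩
    · simp
    · exact .inl (hO.mem_nhds (((PrimeSpectrum.le_iff_specializes ⊥ x).mp bot_le).mem_open hO hx))
  | union s _ t _ hs ht =>
    rcases hs with hs | hs
    · exact .inl (Filter.mem_of_superset hs Set.subset_union_left)
    · rcases ht with ht | ht
      · exact .inl (Filter.mem_of_superset ht Set.subset_union_right)
      · exact .inr (Set.compl_union s t ▸ Filter.inter_mem hs ht)
  | compl s _ hs => rwa [compl_compl, or_comm]

lemma exists_basicOpen_subset_range_comap {R A : Type*} [CommRing R] [IsDomain R] [CommRing A]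
    [IsDomain A] {f : R →+* A} (hf : Function.Injective f) (hfp : f.FinitePresentation) :
    ∃ r : R, r ≠ 0 ∧
      (PrimeSpectrum.basicOpen r : Set (PrimeSpectrum R)) ⊆ Set.range (PrimeSpectrum.comap f) := by
  have hbot : (⊥ : PrimeSpectrum R) ∈ Set.range (PrimeSpectrum.comap f) :=
    ⟨⊥, PrimeSpectrum.ext (Ideal.comap_bot_of_injective f hf)⟩
  have hnhds := (mem_nhds_bot_or_compl_mem_nhds_bot
    (PrimeSpectrum.isConstructible_range_comap hfp)).resolve_right
    fun h => mem_of_mem_nhds h hbot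
  obtain ⟨_, ⟨_, ⟨r, rfl⟩, rfl⟩, hr, hsub⟩ :=
    PrimeSpectrum.isBasis_basic_opens.mem_nhds_iff.mp hnhds
  exact ⟨r, fun h => hr (by simp [h]), hsub⟩

variable {k : Type*} [Field k]
variable {V : Type*} [AddCommGroup V] [Module k V] [FiniteDimensional k V]
variable {W : Type*} [AddCommGroup W] [Module k W] [FiniteDimensional k W]

lemma finitePresentation_coordRing (Ψ : CoordRing k V →ₐ[k] CoordRing k W) :
    Ψ.toRingHom.FinitePresentation := by
  rw [← RingHom.FinitePresentation.of_finiteType]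
  refine AlgHom.FiniteType.of_comp_finiteType (f := Algebra.ofId k _) (g := Ψ) ?_
  rw [Subsingleton.elim (Ψ.comp (Algebra.ofId k _)) (Algebra.ofId k _)]
  exact RingHom.finiteType_algebraMap.mpr (inferInstanceAs (Algebra.FiniteType k (CoordRing k W)))

lemma zeroLocus_vanishingIdeal_singleton (v : V) : zeroLocus (vanishingIdeal k {v}) = {v} := by
  refine Set.Subset.antisymm (fun z hz => ?_) fun _ hz f hf => hf _ hz
  refine (Module.Free.chooseBasis k V).repr.injective (Finsupp.ext fun i => ?_)
  have hi := hz (.X i - .C (coordFn k V v i)) (by rintro _ rfl; simp [evalP])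
  simpa [evalP, coordFn, sub_eq_zero] using hi

lemma exists_isOpen_subset_range [IsAlgClosed k] {F : W → V} (hF : IsPolyMap k F)
    (hdom : @closure V (zar k V) (Set.range F) = Set.univ) :
    ∃ O, IsOpen[zar k V] O ∧ O.Nonempty ∧ O ⊆ Set.range F := by
  let _ := zar k V
  obtain ⟨Ψ, hΨ⟩ := hF.exists_comap
  have hinj : Function.Injective Ψ := by
    rw [RingHom.injective_iff_ker_eq_bot, ker_comap_eq_vanishingIdeal_range hΨ,
      ← vanishingIdeal_closure, hdom]
    exact (Submodule.eq_bot_iff _).mpr fun f hf => eq_zero_of_evalP_eq_zero fun v => hf v trivial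
  obtain ⟨f, hf, hsub⟩ := exists_basicOpen_subset_range_comap hinj (finitePresentation_coordRing Ψ)
  refine ⟨_, (isPolyMap_evalP f).isOpen_ne_zero, ?_, fun v hv => ?_⟩
  · by_contra! hempty
    exact hf (eq_zero_of_evalP_eq_zero fun v =>
      not_not.mp (Set.eq_empty_iff_forall_notMem.mp hempty v))
  · have hprime : (vanishingIdeal k {v}).IsPrime := vanishingIdeal_isPrime isIrreducible_singleton
    obtain ⟨Q, hQ⟩ := hsub (show ⟨_, hprime⟩ ∈ PrimeSpectrum.basicOpen f from fun h => hv (h v rfl))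
    obtain ⟨w, hw⟩ := (isIrreducible_zeroLocus Q.asIdeal).1
    refine ⟨w, ?_⟩
    rw [← Set.mem_singleton_iff, ← zeroLocus_vanishingIdeal_singleton (k := k) v]
    have hcomap : Q.asIdeal.comap Ψ.toRingHom = vanishingIdeal k {v} :=
      congrArg PrimeSpectrum.asIdeal hQ
    intro p hp
    rw [← hcomap] at hp
    rw [← hΨ]
    exact hw _ hp

end CV

end Chevalley

/-! ### The adjoint group -/

section AdjointGroup

namespace CV

variable {k : Type*} [Field k]
variable {g : Type*} [LieRing g] [LieAlgebra k g] [FiniteDimensional k g]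
variable {ι : Type*}

lemma pow_finrank_eq_zero {K V : Type*} [Field K] [AddCommGroup V] [Module K V]
    [FiniteDimensional K V] {f : Module.End K V} (hf : IsNilpotent f) :
    f ^ Module.finrank K V = 0 := by
  obtain ⟨n, hn⟩ := hf
  have hchar := (LinearMap.charpoly_eq_X_pow_iff f).mpr fun v => ⟨n, by rw [hn]; rfl⟩
  simpa [hchar] using LinearMap.aeval_self_charpoly f

lemma isPolyMap_expEnd : IsPolyMap k (expEnd k g) :=
  .sum _ fun i _ => (IsPolyMap.const _).smul (IsPolyMap.id.pow i)

lemma hasJet_expEnd (f : Module.End k g) : HasJet (fun s : k => expEnd k g (s • f)) 1 f := by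
  rcases Nat.eq_zero_or_pos (Module.finrank k g) with hdim | hdim
  · have : Subsingleton g := Module.finrank_zero_iff.mp hdim
    exact (HasJet.const 1).congr (fun _ => Subsingleton.elim _ _) rfl (Subsingleton.elim _ _)
  · obtain ⟨m, hm⟩ := Nat.exists_eq_succ_of_ne_zero hdim.ne'
    refine ⟨fun s => ∑ i ∈ Finset.range m, ((i + 2).factorial : k)⁻¹ • ((s • f) ^ i * f ^ 2),
      .sum _ fun i _ => (IsPolyMap.const _).smul (IsPolyMap.linearMapComp
        ((IsPolyMap.id.smul (.const f)).pow i) (.const _)), fun s => ?_⟩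
    simp only [expEnd]
    rw [hm, Finset.sum_range_succ', Finset.sum_range_succ', Finset.smul_sum, add_assoc,
      add_comm]
    congr 1
    · simp [add_comm]
    · refine Finset.sum_congr rfl fun i _ => ?_
      rw [smul_comm, smul_pow, smul_pow, smul_mul_assoc, smul_smul (s ^ 2), ← pow_add, ← pow_add,
        add_comm 2 i]

/-- The product of the `exp (b i • ad (e i))` for `i` running through the list `l`. -/
def expListProd (e : ι → g) : List ι → (ι → k) → Module.End k g
  | [], _ => 1
  | i :: l, b => expEnd k g (b i • LieAlgebra.ad k g (e i)) * expListProd e l b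

lemma isPolyMap_expListProd [Finite ι] (e : ι → g) (l : List ι) :
    IsPolyMap k (expListProd (k := k) e l) := by
  have := Fintype.ofFinite ι
  induction l with
  | nil => exact .const 1
  | cons i l ih =>
    exact IsPolyMap.linearMapComp (isPolyMap_expEnd.comp
      ((IsPolyMap.linearMap (LinearMap.proj (R := k) (φ := fun _ => k) i)).smul (.const _))) ih

/-- The product of the `exp (b i • ad (e i))` over all `i`, in some fixed order: a polynomial
parametrization of a part of the adjoint group. -/
def expProd [Fintype ι] (e : ι → g) (b : ι → k) : Module.End k g :=
  expListProd e Finset.univ.toList b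

lemma isPolyMap_expProd [Fintype ι] (e : ι → g) : IsPolyMap k (expProd (k := k) e) :=
  isPolyMap_expListProd e _

variable [CharZero k]

lemma expEnd_eq_exp [Module ℚ g] {f : Module.End k g} (hf : IsNilpotent f) :
    expEnd k g f = IsNilpotent.exp f := by
  have hpow : f ^ (Module.finrank k g + 1) = 0 := by
    rw [pow_succ, pow_finrank_eq_zero hf, zero_mul]
  rw [IsNilpotent.exp_eq_sum hpow, expEnd]
  refine Finset.sum_congr rfl fun i _ => LinearMap.ext fun x => ?_
  have hi : (i.factorial : k) ≠ 0 := mod_cast i.factorial_ne_zero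
  have hi' : (i.factorial : ℚ) ≠ 0 := mod_cast i.factorial_ne_zero
  rw [LinearMap.smul_apply, LinearMap.smul_apply, inv_smul_eq_iff₀ hi, Nat.cast_smul_eq_nsmul,
    ← Nat.cast_smul_eq_nsmul ℚ, smul_inv_smul₀ hi']

lemma expEnd_add {f f' : Module.End k g} (h : Commute f f') (hf : IsNilpotent f)
    (hf' : IsNilpotent f') : expEnd k g (f + f') = expEnd k g f * expEnd k g f' := by
  let _ : Module ℚ g := Module.compHom g (algebraMap ℚ k)
  rw [expEnd_eq_exp hf, expEnd_eq_exp hf', expEnd_eq_exp (h.isNilpotent_add hf hf'),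
    IsNilpotent.exp_add_of_commute h hf hf']

lemma expEnd_zero : expEnd k g 0 = 1 := by
  let _ : Module ℚ g := Module.compHom g (algebraMap ℚ k)
  rw [expEnd_eq_exp IsNilpotent.zero, IsNilpotent.exp_zero]

lemma expEnd_mul_expEnd_neg {f : Module.End k g} (hf : IsNilpotent f) :
    expEnd k g f * expEnd k g (-f) = 1 := by
  rw [← expEnd_add (Commute.refl f).neg_right hf hf.neg, add_neg_cancel, expEnd_zero]

lemma expEnd_neg_mul_expEnd {f : Module.End k g} (hf : IsNilpotent f) :
    expEnd k g (-f) * expEnd k g f = 1 := by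
  simpa using expEnd_mul_expEnd_neg hf.neg

lemma expEnd_ad_lie {a : g} (ha : IsNilpotent (LieAlgebra.ad k g a)) (x y : g) :
    expEnd k g (LieAlgebra.ad k g a) ⁅x, y⁆ =
      ⁅expEnd k g (LieAlgebra.ad k g a) x, expEnd k g (LieAlgebra.ad k g a) y⁆ := by
  let _ : Module ℚ g := Module.compHom g (algebraMap ℚ k)
  let _ := LieRing.toNonUnitalNonAssocRing g
  have : SMulCommClass k g g := LieAlgebra.smulCommClass k g
  have : IsScalarTower k g g := LieAlgebra.isScalarTower k g
  rw [expEnd_eq_exp ha]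
  refine Module.End.exp_mul_of_derivation k g (LieAlgebra.ad k g a) (fun x y => ?_) ha x y
  exact (leibniz_lie a x y).trans (add_comm _ _)

lemma exists_mem_adjointGroup_eq_expEnd {a : g} (ha : IsNilpotent (LieAlgebra.ad k g a)) :
    ∃ u ∈ adjointGroup k g, (u : Module.End k g) = expEnd k g (LieAlgebra.ad k g a) :=
  ⟨⟨_, _, expEnd_mul_expEnd_neg ha, expEnd_neg_mul_expEnd ha⟩,
    Subgroup.subset_closure ⟨a, ha, rfl⟩, rfl⟩

lemma adjointGroup_lie {u : (Module.End k g)ˣ} (hu : u ∈ adjointGroup k g) (x y : g) :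
    (u : Module.End k g) ⁅x, y⁆ = ⁅(u : Module.End k g) x, (u : Module.End k g) y⁆ := by
  induction hu using Subgroup.closure_induction generalizing x y with
  | mem u hu =>
    obtain ⟨a, ha, h⟩ := hu
    rw [h]
    exact expEnd_ad_lie ha x y
  | one => rfl
  | mul u v _ _ hu hv => simp only [Units.val_mul, Module.End.mul_apply, hu, hv]
  | inv u _ hu =>
    let e := LinearMap.GeneralLinearGroup.toLinearEquiv u
    change e.symm ⁅x, y⁆ = ⁅e.symm x, e.symm y⁆
    rw [e.symm_apply_eq]
    have hlie := hu (e.symm x) (e.symm y)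
    change e _ = ⁅e _, e _⁆ at hlie
    rw [hlie, e.apply_symm_apply, e.apply_symm_apply]

/-- The automorphism of the Lie algebra `g` defined by an element of its adjoint group. -/
def adjointEquiv {u : (Module.End k g)ˣ} (hu : u ∈ adjointGroup k g) : g ≃ₗ⁅k⁆ g :=
  { LinearMap.GeneralLinearGroup.toLinearEquiv u with map_lie' := adjointGroup_lie hu _ _ }

lemma adjointEquiv_apply {u : (Module.End k g)ˣ} (hu : u ∈ adjointGroup k g) (x : g) :
    adjointEquiv hu x = (u : Module.End k g) x := rfl

lemma hasJet_expEnd_smul {f : Module.End k g} (hf : IsNilpotent f) (b b' : k) :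
    HasJet (fun s : k => expEnd k g ((b + s * b') • f)) (expEnd k g (b • f))
      (expEnd k g (b • f) * (b' • f)) := by
  refine ((HasJet.const (expEnd k g (b • f))).endMul (hasJet_expEnd (b' • f))).congr
    (fun s => ?_) (by simp) (by simp)
  rw [← expEnd_add (((Commute.refl f).smul_left _).smul_right _ |>.smul_right _) (hf.smul _)
    ((hf.smul _).smul _), smul_smul, ← add_smul]

lemma expListProd_zero (e : ι → g) (l : List ι) : expListProd e l (0 : ι → k) = 1 := by
  induction l with
  | nil => rfl
  | cons i l ih => simp [expListProd, expEnd_zero, ih]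

variable {e : ι → g}

lemma exists_mem_adjointGroup_eq_expListProd (he : ∀ i, IsNilpotent (LieAlgebra.ad k g (e i)))
    (l : List ι) (b : ι → k) :
    ∃ u ∈ adjointGroup k g, (u : Module.End k g) = expListProd e l b := by
  induction l with
  | nil => exact ⟨1, one_mem _, rfl⟩
  | cons i l ih =>
    obtain ⟨u, hu, hub⟩ := ih
    obtain ⟨v, hv, hvb⟩ := exists_mem_adjointGroup_eq_expEnd (k := k) (a := b i • e i)
      (by simpa using (he i).smul (b i))
    exact ⟨v * u, mul_mem hv hu, by simp [hub, hvb, expListProd]⟩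

lemma exists_hasJet_expListProd (he : ∀ i, IsNilpotent (LieAlgebra.ad k g (e i)))
    (l : List ι) (b b' : ι → k) :
    ∃ a : g, HasJet (fun s : k => expListProd e l (b + s • b')) (expListProd e l b)
      (expListProd e l b * LieAlgebra.ad k g a) := by
  induction l with
  | nil => exact ⟨0, (HasJet.const 1).congr (fun _ => rfl) rfl (by simp)⟩
  | cons i l ih =>
    obtain ⟨a, ih⟩ := ih
    obtain ⟨u, hu, hub⟩ := exists_mem_adjointGroup_eq_expListProd he l b
    -- `ad (e i) * u = u * ad (u⁻¹ (e i))`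
    refine ⟨b' i • (adjointEquiv hu).symm (e i) + a,
      ((hasJet_expEnd_smul (he i) (b i) (b' i)).endMul ih).congr (fun s => ?_)
        rfl ?_⟩
    · simp [expListProd]
    · have hconj : LieAlgebra.ad k g (e i) * expListProd e l b =
          expListProd e l b * LieAlgebra.ad k g ((adjointEquiv hu).symm (e i)) := by
        ext y
        have hlie := (adjointEquiv hu).map_lie ((adjointEquiv hu).symm (e i)) y
        rw [LieEquiv.apply_symm_apply] at hlie
        simpa [← hub, adjointEquiv_apply] using hlie.symm
      rw [expListProd, map_add, mul_add, mul_assoc, mul_assoc, mul_assoc, smul_mul_assoc,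
        hconj, map_smul, mul_smul_comm]

lemma hasJet_expListProd_zero (he : ∀ i, IsNilpotent (LieAlgebra.ad k g (e i)))
    (l : List ι) (b' : ι → k) :
    HasJet (fun s : k => expListProd e l (0 + s • b')) 1
      (LieAlgebra.ad k g (l.map fun i => b' i • e i).sum) := by
  induction l with
  | nil => exact (HasJet.const 1).congr (fun _ => rfl) rfl (by simp)
  | cons i l ih =>
    refine ((hasJet_expEnd_smul (he i) 0 (b' i)).endMul ih).congr (fun s => ?_) ?_ ?_
    · simp [expListProd]
    · simp [expEnd_zero]
    · simp [expEnd_zero]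

variable [Fintype ι]

lemma expProd_zero (e : ι → g) : expProd e (0 : ι → k) = 1 := expListProd_zero e _

lemma exists_mem_adjointGroup_eq_expProd (he : ∀ i, IsNilpotent (LieAlgebra.ad k g (e i)))
    (b : ι → k) :
    ∃ u ∈ adjointGroup k g, (u : Module.End k g) = expProd e b :=
  exists_mem_adjointGroup_eq_expListProd he _ b

lemma exists_differential_expProd_eq (he : ∀ i, IsNilpotent (LieAlgebra.ad k g (e i)))
    {D : (ι → k) → (ι → k) →ₗ[k] Module.End k g}
    (hD : HasDifferential (expProd e) D) (b b' : ι → k) :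
    ∃ a : g, D b b' = expProd e b * LieAlgebra.ad k g a := by
  obtain ⟨a, ha⟩ := exists_hasJet_expListProd he Finset.univ.toList b b'
  exact ⟨a, (hD (.line b b')).velocity_unique ha⟩

lemma differential_expProd_zero (he : ∀ i, IsNilpotent (LieAlgebra.ad k g (e i)))
    {D : (ι → k) → (ι → k) →ₗ[k] Module.End k g}
    (hD : HasDifferential (expProd e) D) (b' : ι → k) :
    D 0 b' = LieAlgebra.ad k g (∑ i, b' i • e i) := by
  rw [← Finset.sum_map_toList]
  exact (hD (.line 0 b')).velocity_unique (hasJet_expListProd_zero he _ b')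

end CV

end AdjointGroup

/-! ### Root vectors of a reductive Lie algebra -/

section RootVectors
variable {k : Type*} [Field k] {g : Type*} [LieRing g] [LieAlgebra k g]

namespace CV

/-- A root space decomposition `g = t ⊕ ⨁ᵢ k eᵢ` relative to an abelian subalgebra `t`, given by a
choice of a vector `vec i` in each root space. The roots are indexed by `ι`, the involution `neg`
is `α ↦ -α` on indices, and `coroot i` is `⁅vec i, vec (neg i)⁆`, a nonzero multiple of the usual
coroot. -/
structure RootVectors (t : LieSubalgebra k g) (ι : Type*) [Fintype ι] where
  root : ι → Module.Dual k t
  vec : ι → g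
  neg : ι → ι
  coroot : ι → t
  lie_cartan : ∀ h h' : t, ⁅(h : g), (h' : g)⁆ = 0
  root_ne_zero : ∀ i, root i ≠ 0
  root_injective : Function.Injective root
  root_neg : ∀ i, root (neg i) = -root i
  lie_vec : ∀ i (h : t), ⁅(h : g), vec i⁆ = root i h • vec i
  exists_eq_add_sum : ∀ x : g, ∃ (h : t) (c : ι → k), x = h + ∑ i, c i • vec i
  vec_ne_zero : ∀ i, vec i ≠ 0
  eq_or_eq_neg_of_root_eq_smul : ∀ i j (c : k), root j = c • root i → j = i ∨ j = neg i
  lie_vec_neg : ∀ i, ⁅vec i, vec (neg i)⁆ = coroot i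
  root_coroot_ne_zero : ∀ i, root i (coroot i) ≠ 0

end CV
end RootVectors

section Killing
open LieModule LieAlgebra LieAlgebra.IsKilling
variable {k : Type*} [Field k] [IsAlgClosed k] [CharZero k]
variable {L : Type*} [LieRing L] [LieAlgebra k L] [FiniteDimensional k L] [IsKilling k L]
variable {H : LieSubalgebra k L} [H.IsCartanSubalgebra]

namespace CV

lemma exists_smul_eq_of_mem_rootSpace {β : Weight k H L} (hβ : β.IsNonZero) {x y : L}
    (hx : x ∈ rootSpace H β) (hx0 : x ≠ 0) (hy : y ∈ rootSpace H β) : ∃ c : k, c • x = y := by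
  obtain ⟨c, hc⟩ := (finrank_eq_one_iff_of_nonzero' (⟨x, hx⟩ : rootSpace H β)
    (fun h => hx0 (congrArg Subtype.val h))).mp (finrank_rootSpace_eq_one β hβ) ⟨y, hy⟩
  exact ⟨c, congrArg Subtype.val hc⟩

lemma killingForm_ne_zero_of_mem_rootSpace_neg {β : Weight k H L} (hβ : β.IsNonZero) {x y : L}
    (hx : x ∈ rootSpace H β) (hx0 : x ≠ 0) (hy : y ∈ rootSpace H (-β : Weight k H L))
    (hy0 : y ≠ 0) : killingForm k L x y ≠ 0 := by
  intro h0
  have hker := mem_ker_killingForm_of_mem_rootSpace_of_forall_rootSpace_neg k L H hx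
    fun z hz => by
      obtain ⟨c, rfl⟩ := exists_smul_eq_of_mem_rootSpace hβ.neg hy hy0 hz
      rw [map_smul, h0, smul_zero]
  rw [ker_killingForm_eq_bot] at hker
  exact hx0 hker

lemma exists_eq_add_sum_of_mem_rootSpace {e : {β : Weight k H L // β.IsNonZero} → L}
    (he : ∀ β, e β ∈ rootSpace H β.1) (he0 : ∀ β, e β ≠ 0) (x : L) :
    ∃ (h : H) (c : {β : Weight k H L // β.IsNonZero} → k), x = h + ∑ β, c β • e β := by
  classical
  have hx : x ∈ ⨆ χ : Weight k H L, genWeightSpace L χ := by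
    rw [iSup_genWeightSpace_eq_top' k H L]
    trivial
  induction hx using LieSubmodule.iSup_induction' with
  | mem χ x hx =>
    by_cases hχ : χ.IsZero
    · have hxH : x ∈ rootSpace H (0 : H → k) := by
        rwa [show (χ : H → k) = 0 from hχ] at hx
      rw [rootSpace_zero_eq] at hxH
      exact ⟨⟨x, hxH⟩, 0, by simp⟩
    · obtain ⟨c, rfl⟩ := exists_smul_eq_of_mem_rootSpace hχ (he ⟨χ, hχ⟩) (he0 ⟨χ, hχ⟩) hx
      exact ⟨0, Pi.single ⟨χ, hχ⟩ c, by simp [Pi.single_apply]⟩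
  | zero => exact ⟨0, 0, by simp⟩
  | add x y _ _ hx hy =>
    obtain ⟨h, c, rfl⟩ := hx
    obtain ⟨h', c', rfl⟩ := hy
    refine ⟨h + h', c + c', ?_⟩
    simp only [Pi.add_apply, add_smul, Finset.sum_add_distrib, AddMemClass.coe_add]
    abel

lemma span_smul_cartanEquivDual_symm_eq_top {a : {β : Weight k H L // β.IsNonZero} → k}
    (ha : ∀ β, a β ≠ 0) :
    Submodule.span k (Set.range fun β : {β : Weight k H L // β.IsNonZero} =>
      a β • (cartanEquivDual H).symm β.1.toLinear) = ⊤ := by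
  set S := Submodule.span k (Set.range fun β : {β : Weight k H L // β.IsNonZero} =>
    a β • (cartanEquivDual H).symm β.1.toLinear)
  have hle : (⊤ : Submodule k (Module.Dual k H)) ≤
      S.comap (cartanEquivDual H).symm.toLinearMap := by
    rw [← span_weight_isNonZero_eq_top (K := k) (L := L) (H := H), Submodule.span_le]
    rintro _ ⟨β, hβ, rfl⟩
    refine (S.smul_mem_iff (ha ⟨β, hβ⟩)).mp ?_
    exact Submodule.subset_span ⟨⟨β, hβ⟩, rfl⟩
  refine eq_top_iff.mpr fun h _ => ?_
  have := hle (x := cartanEquivDual H h) trivial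
  simpa using this

lemma exists_rootVectors_of_isKilling (H : LieSubalgebra k L) [H.IsCartanSubalgebra] :
    ∃ R : RootVectors H {β : Weight k H L // β.IsNonZero},
      Submodule.span k (Set.range R.coroot) = ⊤ := by
  choose e he he0 using fun β : {β : Weight k H L // β.IsNonZero} => β.1.exists_ne_zero
  let neg (β : {β : Weight k H L // β.IsNonZero}) : {β : Weight k H L // β.IsNonZero} :=
    ⟨-β.1, β.2.neg⟩
  have hkilling : ∀ β, killingForm k L (e β) (e (neg β)) ≠ 0 := fun β =>
    killingForm_ne_zero_of_mem_rootSpace_neg β.2 (he β) (he0 β) (he (neg β)) (he0 (neg β))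
  refine ⟨{
    root := fun β => β.1.toLinear
    vec := e
    neg := neg
    coroot := fun β =>
      killingForm k L (e β) (e (neg β)) • (cartanEquivDual H).symm β.1.toLinear
    lie_cartan := fun h h' => congrArg Subtype.val (trivial_lie_zero H H h h')
    root_ne_zero := fun β => Weight.coe_toLinear_ne_zero_iff.mpr β.2
    root_injective := fun β β' h =>
      Subtype.ext (DFunLike.coe_injective (funext fun x => DFunLike.congr_fun h x))
    root_neg := fun β => rfl
    lie_vec := fun β h => lie_eq_smul_of_mem_rootSpace (he β) h
    exists_eq_add_sum := exists_eq_add_sum_of_mem_rootSpace he he0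
    vec_ne_zero := he0
    eq_or_eq_neg_of_root_eq_smul := fun β β' c h =>
      (eq_neg_or_eq_of_eq_smul β.1 β'.1 β'.2 c (funext fun x => DFunLike.congr_fun h x)).symm.imp
        Subtype.ext Subtype.ext
    lie_vec_neg := fun β =>
      lie_eq_killingForm_smul_of_mem_rootSpace_of_mem_rootSpace_neg (he β) (he (neg β))
    root_coroot_ne_zero := fun β => by
      rw [map_smul, smul_eq_mul]
      exact mul_ne_zero (hkilling β) (root_apply_cartanEquivDual_symm_ne_zero β.2) }, ?_⟩
  exact span_smul_cartanEquivDual_symm_eq_top hkilling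

end CV
end Killing

section CentralExtension
open LieAlgebra
variable {k : Type*} [Field k] {g : Type*} [LieRing g] [LieAlgebra k g]
variable {Q : Type*} [LieRing Q] [LieAlgebra k Q] {π : g →ₗ⁅k⁆ Q}

namespace CV

lemma mem_center_iff_lie_eq_zero {x : g} : x ∈ center k g ↔ ∀ y : g, ⁅x, y⁆ = 0 := by
  rw [LieModule.mem_maxTrivSubmodule]
  exact forall_congr' fun y => by rw [← lie_skew, neg_eq_zero]

lemma isSolvable_of_lie_le_center {J : LieIdeal k g} (hJ : ⁅J, J⁆ ≤ center k g) :
    IsSolvable J := by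
  refine (isSolvable_iff k J).mpr ⟨2, (LieIdeal.derivedSeries_eq_bot_iff J 2).mpr ?_⟩
  rw [derivedSeriesOfIdeal_succ, derivedSeriesOfIdeal_succ, derivedSeriesOfIdeal_zero,
    LieSubmodule.lie_eq_bot_iff]
  exact fun x hx y _ => mem_center_iff_lie_eq_zero.mp (hJ hx) y

lemma hasTrivialRadical_of_ker_eq_center [IsNoetherian k g]
    (hred : radical k g = center k g)
    (hπ : Function.Surjective π) (hker : π.ker = center k g) : HasTrivialRadical k Q := by
  rw [hasTrivialRadical_iff_no_abelian_ideals]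
  intro I hI
  have hlie : ⁅I.comap π, I.comap π⁆ ≤ center k g := by
    rw [LieSubmodule.lieIdeal_oper_eq_span, LieSubmodule.lieSpan_le, ← hker]
    rintro _ ⟨⟨x, hx⟩, ⟨y, hy⟩, rfl⟩
    change π ⁅x, y⁆ = 0
    rw [LieHom.map_lie]
    exact congrArg Subtype.val (trivial_lie_zero I I ⟨π x, hx⟩ ⟨π y, hy⟩)
  have hle : I.comap π ≤ center k g := by
    rw [← hred]
    exact (LieIdeal.solvable_iff_le_radical k g _).mp (isSolvable_of_lie_le_center hlie)
  rw [eq_bot_iff]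
  intro y hy
  obtain ⟨x, rfl⟩ := hπ y
  exact π.mem_ker.mp (hker ▸ hle hy)

lemma mem_of_mem_center {t : LieSubalgebra k g} (ht : t.IsCartanSubalgebra) {x : g}
    (hx : x ∈ center k g) : x ∈ t := by
  rw [← ht.self_normalizing, LieSubalgebra.mem_normalizer_iff]
  intro y _
  rw [mem_center_iff_lie_eq_zero.mp hx]
  exact t.zero_mem

lemma exists_coe_eq_of_map_eq {t : LieSubalgebra k g} (ht : t.IsCartanSubalgebra)
    (hker : π.ker ≤ center k g) {x : g} {h : t} (hx : π x = π h) : ∃ h' : t, (h' : g) = x := by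
  have hsub : x - h ∈ t := mem_of_mem_center ht (hker (by rw [π.mem_ker, map_sub, hx, sub_self]))
  exact ⟨⟨x, by simpa using t.add_mem hsub h.2⟩, rfl⟩

lemma isCartanSubalgebra_range_comp_incl {t : LieSubalgebra k g} (ht : t.IsCartanSubalgebra)
    (hπ : Function.Surjective π) (hker : π.ker ≤ center k g) :
    (π.comp t.incl).range.IsCartanSubalgebra := by
  have := ht.nilpotent
  refine ⟨(π.comp t.incl).surjective_rangeRestrict.lieAlgebra_isNilpotent, ?_⟩
  refine le_antisymm (fun y hy => ?_) (LieSubalgebra.le_normalizer _)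
  obtain ⟨x, rfl⟩ := hπ y
  rw [LieSubalgebra.mem_normalizer_iff] at hy
  suffices hx : x ∈ t from ⟨⟨x, hx⟩, rfl⟩
  rw [← ht.self_normalizing, LieSubalgebra.mem_normalizer_iff]
  intro z hz
  obtain ⟨w, hw⟩ := hy (π z) ⟨⟨z, hz⟩, rfl⟩
  obtain ⟨h, hh⟩ := exists_coe_eq_of_map_eq ht hker (x := ⁅x, z⁆) (h := w)
    ((π.map_lie x z).trans hw.symm)
  exact hh ▸ h.2

-- With `χ h₀ = 1`, bracketing any lift with `h₀` removes its central ambiguity.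
lemma exists_lift_of_lie_eq_smul {t : LieSubalgebra k g} (hπ : Function.Surjective π)
    (hker : π.ker ≤ center k g) (hab : ∀ h h' : t, ⁅π h, π h'⁆ = 0) {χ : Module.Dual k t}
    (hχ : χ ≠ 0) {y : Q} (hy : ∀ h : t, ⁅π h, y⁆ = χ h • y) :
    ∃ x : g, π x = y ∧ ∀ h : t, ⁅(h : g), x⁆ = χ h • x := by
  obtain ⟨h₀, hh₀⟩ := LinearMap.surjective hχ 1
  obtain ⟨x, rfl⟩ := hπ y
  refine ⟨⁅(h₀ : g), x⁆, by rw [π.map_lie, hy, hh₀, one_smul], fun h => ?_⟩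
  have hcomm : ⁅⁅(h : g), (h₀ : g)⁆, x⁆ = 0 :=
    mem_center_iff_lie_eq_zero.mp (hker (π.mem_ker.mpr (by rw [π.map_lie, hab]))) x
  have hdiff : ⁅(h₀ : g), ⁅(h : g), x⁆ - χ h • x⁆ = 0 :=
    (LieModule.mem_maxTrivSubmodule k g g _).mp
      (hker (π.mem_ker.mpr (by rw [map_sub, π.map_lie, map_smul, hy, sub_self]))) h₀
  rw [lie_sub, lie_smul, sub_eq_zero] at hdiff
  rw [leibniz_lie, hcomm, zero_add, hdiff]

-- Modulo the center, `t` is spanned by the brackets `⁅e i, e' i⁆`, which commute with `t`.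
lemma lie_eq_zero_of_span_lie_eq_top {t : LieSubalgebra k g} {ι : Type*} {χ : ι → Module.Dual k t}
    {e e' : ι → g} (he : ∀ i (h : t), ⁅(h : g), e i⁆ = χ i h • e i)
    (he' : ∀ i (h : t), ⁅(h : g), e' i⁆ = -χ i h • e' i) (hker : π.ker ≤ center k g)
    (hspan : ∀ h : t, π h ∈ Submodule.span k (Set.range fun i => π ⁅e i, e' i⁆)) (h h' : t) :
    ⁅(h : g), (h' : g)⁆ = 0 := by
  let S : Submodule k g := Submodule.span k (Set.range fun i => ⁅e i, e' i⁆)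
  have hS : ∀ z ∈ S, ⁅(h : g), z⁆ = 0 := by
    have hle : S ≤ LinearMap.ker (ad k g (h : g)) := by
      rw [Submodule.span_le]
      rintro _ ⟨i, rfl⟩
      rw [SetLike.mem_coe, LinearMap.mem_ker, ad_apply, leibniz_lie, he, he', smul_lie, lie_smul,
        neg_smul, add_neg_cancel]
    exact fun z hz => hle hz
  have hmem : π h' ∈ S.map (π : g →ₗ[k] Q) := by
    rw [Submodule.map_span, ← Set.range_comp]
    exact hspan h'
  obtain ⟨z, hz, hzh⟩ := hmem
  have hcentral : (h' : g) - z ∈ center k g :=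
    hker (by rw [π.mem_ker, map_sub, sub_eq_zero]; exact hzh.symm)
  have := (LieModule.mem_maxTrivSubmodule k g g _).mp hcentral h
  rwa [lie_sub, hS z hz, sub_zero] at this

lemma exists_eq_add_sum_of_map_eq {t : LieSubalgebra k g} (ht : t.IsCartanSubalgebra)
    (hker : π.ker ≤ center k g) {ι : Type*} [Fintype ι] {e : ι → g} {c : ι → k} {x : g} {h : t}
    (hx : π x = π h + ∑ i, c i • π (e i)) : ∃ h' : t, x = h' + ∑ i, c i • e i := by
  obtain ⟨h', hh'⟩ := exists_coe_eq_of_map_eq ht hker (x := x - ∑ i, c i • e i) (h := h) (by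
    simp only [map_sub, hx, map_sum, map_smul, add_sub_cancel_right])
  exact ⟨h', by rw [hh', sub_add_cancel]⟩

lemma coe_mem_span_of_span_eq_top {V ι : Type*} [AddCommGroup V] [Module k V] {U : Submodule k V}
    {v : ι → U} (hv : Submodule.span k (Set.range v) = ⊤) (u : U) :
    (u : V) ∈ Submodule.span k (Set.range fun i => (v i : V)) := by
  have := Submodule.mem_map_of_mem (f := U.subtype)
    (show u ∈ Submodule.span k (Set.range v) from hv ▸ trivial)
  rwa [Submodule.map_span, ← Set.range_comp] at this

namespace RootVectors

variable {t : LieSubalgebra k g} {ι : Type*} [Fintype ι]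
variable (R : RootVectors (π.comp t.incl).range ι)

/-- The pullback to `t` of a root relative to the image of `t` under `π`. -/
def pullbackRoot (i : ι) : Module.Dual k t :=
  R.root i ∘ₗ ((π.comp t.incl).rangeRestrict : t →ₗ[k] (π.comp t.incl).range)

lemma root_eq_of_pullbackRoot_eq {i : ι} {χ : Module.Dual k (π.comp t.incl).range}
    (h : R.pullbackRoot i = χ ∘ₗ ((π.comp t.incl).rangeRestrict : t →ₗ[k] _)) : R.root i = χ :=
  (LinearMap.cancel_right (π.comp t.incl).surjective_rangeRestrict).mp h

lemma pullbackRoot_ne_zero (i : ι) : R.pullbackRoot i ≠ 0 := fun h =>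
  R.root_ne_zero i (R.root_eq_of_pullbackRoot_eq h)

lemma pullbackRoot_neg (i : ι) : R.pullbackRoot (R.neg i) = -R.pullbackRoot i := by
  rw [pullbackRoot, R.root_neg, LinearMap.neg_comp, pullbackRoot]

lemma exists_lift_vec (hπ : Function.Surjective π) (hker : π.ker ≤ center k g) :
    ∃ e : ι → g, (∀ i, π (e i) = R.vec i) ∧
      ∀ i (h : t), ⁅(h : g), e i⁆ = R.pullbackRoot i h • e i := by
  let ρ := (π.comp t.incl).rangeRestrict
  choose e hπe hlie using fun i => exists_lift_of_lie_eq_smul hπ hker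
    (fun h h' => R.lie_cartan (ρ h) (ρ h')) (R.pullbackRoot_ne_zero i) fun h => R.lie_vec i (ρ h)
  exact ⟨e, hπe, hlie⟩

lemma exists_lift_coroot (ht : t.IsCartanSubalgebra) (hker : π.ker ≤ center k g) {e : ι → g}
    (he : ∀ i, π (e i) = R.vec i) :
    ∃ coroot : ι → t, ∀ i, ⁅e i, e (R.neg i)⁆ = coroot i ∧
      (π.comp t.incl).rangeRestrict (coroot i) = R.coroot i := by
  have hπlie (i : ι) : π ⁅e i, e (R.neg i)⁆ = R.coroot i := by
    rw [π.map_lie, he, he, R.lie_vec_neg]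
  have hexists (i : ι) : ∃ c : t, (c : g) = ⁅e i, e (R.neg i)⁆ := by
    obtain ⟨h, hh⟩ := (π.comp t.incl).surjective_rangeRestrict (R.coroot i)
    exact exists_coe_eq_of_map_eq ht hker (h := h)
      ((hπlie i).trans (congrArg Subtype.val hh).symm)
  choose coroot hcoroot using hexists
  exact ⟨coroot, fun i => ⟨(hcoroot i).symm,
    Subtype.ext ((congrArg π (hcoroot i)).trans (hπlie i))⟩⟩

lemma exists_lift (ht : t.IsCartanSubalgebra) (hπ : Function.Surjective π)
    (hker : π.ker ≤ center k g) (hR : Submodule.span k (Set.range R.coroot) = ⊤) :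
    Nonempty (RootVectors t ι) := by
  obtain ⟨e, hπe, hlie⟩ := R.exists_lift_vec hπ hker
  obtain ⟨coroot, hcoroot⟩ := R.exists_lift_coroot ht hker hπe
  have hspan (h : t) : π h ∈ Submodule.span k (Set.range fun i => π ⁅e i, e (R.neg i)⁆) := by
    simp only [π.map_lie, hπe, R.lie_vec_neg]
    exact coe_mem_span_of_span_eq_top hR ((π.comp t.incl).rangeRestrict h)
  exact ⟨{
    root := R.pullbackRoot
    vec := e
    neg := R.neg
    coroot := coroot
    lie_cartan := lie_eq_zero_of_span_lie_eq_top hlie (e' := e ∘ R.neg)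
      (fun i h => by rw [Function.comp_apply, hlie, pullbackRoot_neg, LinearMap.neg_apply])
      hker hspan
    root_ne_zero := R.pullbackRoot_ne_zero
    root_injective := fun i j h => R.root_injective (R.root_eq_of_pullbackRoot_eq h)
    root_neg := R.pullbackRoot_neg
    lie_vec := hlie
    exists_eq_add_sum := fun x => by
      obtain ⟨h', c, hx⟩ := R.exists_eq_add_sum (π x)
      obtain ⟨h, rfl⟩ := (π.comp t.incl).surjective_rangeRestrict h'
      simp only [← hπe] at hx
      obtain ⟨h'', hx'⟩ := exists_eq_add_sum_of_map_eq ht hker hx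
      exact ⟨h'', c, hx'⟩
    vec_ne_zero := fun i h => R.vec_ne_zero i (by rw [← hπe, h, map_zero])
    eq_or_eq_neg_of_root_eq_smul := fun i j c h =>
      R.eq_or_eq_neg_of_root_eq_smul i j c (R.root_eq_of_pullbackRoot_eq h)
    lie_vec_neg := fun i => (hcoroot i).1
    root_coroot_ne_zero := fun i =>
      (congrArg (R.root i) (hcoroot i).2).trans_ne (R.root_coroot_ne_zero i) }⟩

end RootVectors

end CV
end CentralExtension

section Reductive
universe u v
variable {k : Type u} [Field k] [IsAlgClosed k] [CharZero k]
variable {g : Type v} [LieRing g] [LieAlgebra k g] [FiniteDimensional k g]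

namespace CV

lemma exists_rootVectors (hred : LieAlgebra.radical k g = LieAlgebra.center k g)
    {t : LieSubalgebra k g} (ht : t.IsCartanSubalgebra) :
    ∃ (ι : Type (max u v)) (_ : Fintype ι), Nonempty (RootVectors t ι) := by
  let π := (LieDerivation.ad k g).rangeRestrict
  have hπ : Function.Surjective π := (LieDerivation.ad k g).surjective_rangeRestrict
  have hker : π.ker = LieAlgebra.center k g := by
    rw [← LieDerivation.ad_ker_eq_center]
    ext x
    rw [LieHom.mem_ker, LieHom.mem_ker]
    exact Subtype.ext_iff
  have := hasTrivialRadical_of_ker_eq_center hred hπ hker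
  have := isCartanSubalgebra_range_comp_incl ht hπ hker.le
  obtain ⟨R, hR⟩ := exists_rootVectors_of_isKilling (π.comp t.incl).range
  exact ⟨_, inferInstance, R.exists_lift ht hπ hker.le hR⟩

end CV
end Reductive

section RootDecomposition
variable {k : Type*} [Field k]

namespace CV

lemma mem_of_sum_mem_of_apply_eq_smul {κ V : Type*} [Fintype κ] [AddCommGroup V] [Module k V]
    {f : Module.End k V} {μ : κ → k} (hμ : Function.Injective μ) {v : κ → V}
    (hv : ∀ i, f (v i) = μ i • v i) {E : Submodule k V} (hE : E ≤ E.comap f)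
    (hsum : ∑ i, v i ∈ E) (i : κ) : v i ∈ E := by
  classical
  have hproj : Polynomial.aeval f (Lagrange.basis Finset.univ μ i) (∑ j, v j) = v i := by
    rw [map_sum, Finset.sum_eq_single i]
    · rw [Module.End.aeval_apply_of_mem_apply_eq_smul (hv i),
        Lagrange.eval_basis_self hμ.injOn (Finset.mem_univ i), one_smul]
    · intro j _ hj
      rw [Module.End.aeval_apply_of_mem_apply_eq_smul (hv j),
        Lagrange.eval_basis_of_ne hj.symm (Finset.mem_univ j), zero_smul]
    · exact fun hi => absurd (Finset.mem_univ i) hi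
  exact hproj ▸ Polynomial.aeval_apply_smul_mem_of_le_comap hsum _ f hE

namespace RootVectors
variable {g : Type*} [LieRing g] [LieAlgebra k g] {t : LieSubalgebra k g}
variable {ι : Type*} [Fintype ι] (R : RootVectors t ι)

lemma vec_lie (i : ι) (h : t) : ⁅R.vec i, (h : g)⁆ = -R.root i h • R.vec i := by
  rw [← lie_skew, R.lie_vec, neg_smul]

lemma neg_ne [CharZero k] (i : ι) : R.neg i ≠ i := by
  intro h
  have h2 := R.root_neg i
  rw [h, eq_neg_iff_add_eq_zero, ← two_smul k] at h2
  exact R.root_ne_zero i ((smul_eq_zero.mp h2).resolve_left two_ne_zero)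

lemma exists_regular [Infinite k] :
    ∃ h : t, (∀ i, R.root i h ≠ 0) ∧ Function.Injective (fun i => R.root i h) := by
  let f : ι ⊕ {p : ι × ι // p.1 ≠ p.2} → Module.Dual k t
    | .inl i => R.root i
    | .inr p => R.root p.1.1 - R.root p.1.2
  have hf : ∀ s, ∃ h, f s h ≠ 0 := by
    rintro (i | ⟨⟨i, j⟩, hij⟩)
    · exact DFunLike.ne_iff.mp (R.root_ne_zero i)
    · exact DFunLike.ne_iff.mp (sub_ne_zero.mpr fun h => hij (R.root_injective h))
  obtain ⟨h, hh⟩ := Module.Dual.exists_forall_ne_zero_of_forall_exists f hf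
  refine ⟨h, fun i => hh (.inl i), fun i j hij => ?_⟩
  by_contra hne
  exact hh (.inr ⟨(i, j), hne⟩) (sub_eq_zero.mpr hij)

lemma exists_root_eq_zero_forall_root_ne_zero [Infinite k] (i : ι) : ∃ h : t, R.root i h = 0 ∧
    ∀ j, j ≠ i → j ≠ R.neg i → R.root j h ≠ 0 := by
  have hf : ∀ j : {j // j ≠ i ∧ j ≠ R.neg i}, ∃ h ∈ LinearMap.ker (R.root i), R.root j h ≠ 0 := by
    rintro ⟨j, hji, hjn⟩
    by_contra! hker
    have hspan := mem_span_of_iInf_ker_le_ker (L := fun _ : Unit => R.root i) (K := R.root j)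
      (iInf_const.trans_le fun h hh => hker h hh)
    rw [Set.range_const, Submodule.mem_span_singleton] at hspan
    obtain ⟨c, hc⟩ := hspan
    exact (R.eq_or_eq_neg_of_root_eq_smul i j c hc.symm).elim hji hjn
  obtain ⟨h, hh, hne⟩ := Module.Dual.exists_forall_mem_ne_zero_of_forall_exists
    (LinearMap.ker (R.root i)) (fun j : {j // j ≠ i ∧ j ≠ R.neg i} => R.root j) hf
  exact ⟨h, hh, fun j hji hjn => hne ⟨j, hji, hjn⟩⟩

lemma linearIndependent_vec [Infinite k] : LinearIndependent k R.vec := by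
  obtain ⟨h, -, hinj⟩ := R.exists_regular
  exact Module.End.eigenvectors_linearIndependent' (LieAlgebra.ad k g (h : g)) _ hinj R.vec
    fun i => ⟨Module.End.mem_eigenspace_iff.mpr (R.lie_vec i h), R.vec_ne_zero i⟩

lemma lie_add_sum (h h' : t) (c : ι → k) :
    ⁅(h : g), (h' : g) + ∑ i, c i • R.vec i⁆ = ∑ i, (c i * R.root i h) • R.vec i := by
  simp only [lie_add, R.lie_cartan, zero_add, lie_sum, lie_smul, R.lie_vec, smul_smul]

lemma eq_zero_of_add_sum_eq_zero [Infinite k] {h : t} {c : ι → k}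
    (hc : (h : g) + ∑ i, c i • R.vec i = 0) : h = 0 ∧ c = 0 := by
  obtain ⟨h₁, hne, -⟩ := R.exists_regular
  have hlie := R.lie_add_sum h₁ h c
  rw [hc, lie_zero] at hlie
  have hc0 : c = 0 := funext fun i => (mul_eq_zero.mp
    (Fintype.linearIndependent_iff.mp R.linearIndependent_vec _ hlie.symm i)).resolve_right (hne i)
  exact ⟨Subtype.ext (by simpa [hc0] using hc), hc0⟩

/-- The root space decomposition `t × kᶥ ≃ g`, `(h, c) ↦ h + ∑ᵢ cᵢ eᵢ`. -/
def decomp [Infinite k] : (t × (ι → k)) ≃ₗ[k] g :=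
  LinearEquiv.ofBijective (t.incl.toLinearMap.coprod (Fintype.linearCombination k R.vec)) <| by
    refine ⟨(injective_iff_map_eq_zero _).mpr fun w hw => ?_, fun x => ?_⟩
    · obtain ⟨h0, c0⟩ := R.eq_zero_of_add_sum_eq_zero (h := w.1) (c := w.2) hw
      exact Prod.ext h0 c0
    · obtain ⟨h, c, rfl⟩ := R.exists_eq_add_sum x
      exact ⟨(h, c), rfl⟩

variable [Infinite k]

/-- The projection of `g` onto `t` along the root spaces. -/
def cartanPart : g →ₗ[k] t := LinearMap.fst k t (ι → k) ∘ₗ R.decomp.symm.toLinearMap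

/-- The coefficient of the root vector `vec i` in the root space decomposition. -/
def coeff (i : ι) : g →ₗ[k] k :=
  LinearMap.proj i ∘ₗ LinearMap.snd k t (ι → k) ∘ₗ R.decomp.symm.toLinearMap

lemma cartanPart_add_sum (h : t) (c : ι → k) : R.cartanPart (h + ∑ i, c i • R.vec i) = h :=
  congrArg Prod.fst (R.decomp.symm_apply_apply (h, c))

lemma coeff_add_sum (h : t) (c : ι → k) (j : ι) :
    R.coeff j (h + ∑ i, c i • R.vec i) = c j :=
  congrFun (congrArg Prod.snd (R.decomp.symm_apply_apply (h, c))) j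

lemma cartanPart_add_sum_coeff (x : g) : (R.cartanPart x : g) + ∑ i, R.coeff i x • R.vec i = x :=
  R.decomp.apply_symm_apply x

lemma cartanPart_coe (h : t) : R.cartanPart h = h := by
  simpa using R.cartanPart_add_sum h 0

lemma coeff_coe (h : t) (i : ι) : R.coeff i h = 0 := by
  simpa using R.coeff_add_sum h 0 i

lemma cartanPart_vec (i : ι) : R.cartanPart (R.vec i) = 0 := by
  classical
  simpa [Pi.single_apply] using R.cartanPart_add_sum 0 (Pi.single i 1)

lemma coeff_vec [DecidableEq ι] (i j : ι) : R.coeff j (R.vec i) = if j = i then 1 else 0 := by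
  simpa [Pi.single_apply] using R.coeff_add_sum 0 (Pi.single i 1) j

lemma vec_notMem_cartan (i : ι) : R.vec i ∉ t := fun hmem => by
  classical
  have hcoeff : R.coeff i (R.vec i) = 0 := R.coeff_coe ⟨_, hmem⟩ i
  simp [R.coeff_vec] at hcoeff

lemma cartanPart_lie (h : t) (x : g) : R.cartanPart ⁅(h : g), x⁆ = 0 := by
  have hlie := R.lie_add_sum h (R.cartanPart x) (fun i => R.coeff i x)
  rw [R.cartanPart_add_sum_coeff] at hlie
  rw [hlie]
  simpa using R.cartanPart_add_sum 0 (fun i => R.coeff i x * R.root i h)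

lemma coeff_lie (h : t) (x : g) (i : ι) :
    R.coeff i ⁅(h : g), x⁆ = R.root i h * R.coeff i x := by
  have hlie := R.lie_add_sum h (R.cartanPart x) (fun i => R.coeff i x)
  rw [R.cartanPart_add_sum_coeff] at hlie
  rw [hlie]
  simpa [mul_comm] using R.coeff_add_sum 0 (fun i => R.coeff i x * R.root i h) i

lemma root_eq_of_lie_eq_smul {γ : Module.Dual k t} {x : g} (hx : ∀ h : t, ⁅(h : g), x⁆ = γ h • x)
    {i : ι} (hi : R.coeff i x ≠ 0) : R.root i = γ := by
  ext h
  have hcoeff := R.coeff_lie h x i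
  rw [hx, map_smul, smul_eq_mul] at hcoeff
  exact (mul_right_cancel₀ hi hcoeff).symm

lemma exists_eq_smul_of_lie_eq_smul {γ : Module.Dual k t} (hγ : γ ≠ 0) {x : g} (hx0 : x ≠ 0)
    (hx : ∀ h : t, ⁅(h : g), x⁆ = γ h • x) : ∃ i, R.root i = γ ∧ ∃ c : k, x = c • R.vec i := by
  obtain ⟨h, hh⟩ := DFunLike.ne_iff.mp hγ
  have hcartan : R.cartanPart x = 0 := by
    have hlie := R.cartanPart_lie h x
    rw [hx, map_smul] at hlie
    exact (smul_eq_zero.mp hlie).resolve_left hh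
  have hsum := R.cartanPart_add_sum_coeff x
  rw [hcartan, ZeroMemClass.coe_zero, zero_add] at hsum
  obtain ⟨i, -, hi⟩ := Finset.exists_ne_zero_of_sum_ne_zero (hsum.trans_ne hx0)
  have hroot := R.root_eq_of_lie_eq_smul hx (left_ne_zero_of_smul hi)
  refine ⟨i, hroot, R.coeff i x, ?_⟩
  refine hsum.symm.trans (Finset.sum_eq_single i (fun j _ hj => ?_)
    fun h => absurd (Finset.mem_univ i) h)
  by_contra hne
  exact hj (R.root_injective
    ((R.root_eq_of_lie_eq_smul hx (left_ne_zero_of_smul hne)).trans hroot.symm))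

lemma exists_root_eq_of_isRootOf {γ : Module.Dual k t} (hγ : IsRootOf k g t γ) :
    ∃ i, R.root i = γ := by
  obtain ⟨x, hx, hx0⟩ := (Submodule.ne_bot_iff _).mp hγ.2
  obtain ⟨i, hi, -⟩ := R.exists_eq_smul_of_lie_eq_smul hγ.1 hx0 hx
  exact ⟨i, hi⟩

lemma vec_mem_of_coeff_ne_zero {E : LieSubalgebra k g} (htE : t ≤ E) {x : g} (hx : x ∈ E) {i : ι}
    (hi : R.coeff i x ≠ 0) : R.vec i ∈ E := by
  obtain ⟨h, hne, hinj⟩ := R.exists_regular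
  have hsmul : R.coeff i x • R.vec i ∈ E.toSubmodule := by
    refine mem_of_sum_mem_of_apply_eq_smul (κ := Option ι) (f := LieAlgebra.ad k g (h : g))
      (μ := fun o => o.elim 0 fun i => R.root i h)
      (v := fun o => o.elim (R.cartanPart x : g) fun i => R.coeff i x • R.vec i)
      ?_ ?_ (fun y hy => E.lie_mem (htE h.2) hy) ?_ (some i)
    · rintro (_ | i) (_ | j) hij
      · rfl
      · exact absurd hij.symm (hne j)
      · exact absurd hij (hne i)
      · exact congrArg some (hinj hij)
    · rintro (_ | i)
      · simp [R.lie_cartan]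
      · simp [R.lie_vec, smul_smul, mul_comm]
    · simpa [Fintype.sum_option, R.cartanPart_add_sum_coeff] using hx
  exact (E.toSubmodule.smul_mem_iff hi).mp hsmul

lemma finrank_eq_add_ncard {E : LieSubalgebra k g} [FiniteDimensional k t] (htE : t ≤ E) :
    Module.finrank k E = Module.finrank k t + {i | R.vec i ∈ E}.ncard := by
  classical
  let restr : E →ₗ[k] t × ({i // R.vec i ∈ E} → k) :=
    (R.cartanPart.prod (LinearMap.pi fun i => R.coeff i.1)) ∘ₗ E.toSubmodule.subtype
  have hinj : Function.Injective restr := by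
    refine (injective_iff_map_eq_zero _).mpr fun x hx => Subtype.ext ?_
    have hcoeff : ∀ i, R.coeff i (x : g) = 0 := fun i => by
      by_contra hi
      exact hi (congrFun (congrArg Prod.snd hx) ⟨i, R.vec_mem_of_coeff_ne_zero htE x.2 hi⟩)
    have hcartan : R.cartanPart (x : g) = 0 := congrArg Prod.fst hx
    rw [← R.cartanPart_add_sum_coeff x, hcartan]
    simp [hcoeff]
  have hsurj : Function.Surjective restr := by
    rintro ⟨h, c⟩
    have hmem : ∑ i : {i // R.vec i ∈ E}, c i • R.vec i ∈ E.toSubmodule :=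
      Submodule.sum_mem _ fun i _ => E.toSubmodule.smul_mem _ i.2
    refine ⟨⟨h, htE h.2⟩ + ⟨_, hmem⟩, Prod.ext ?_ (funext fun i => ?_)⟩
    · change R.cartanPart ((h : g) + ∑ i : {i // R.vec i ∈ E}, c i • R.vec i) = h
      simp [R.cartanPart_coe, R.cartanPart_vec]
    · change R.coeff i ((h : g) + ∑ i : {i // R.vec i ∈ E}, c i • R.vec i) = c i
      simp [R.coeff_coe, R.coeff_vec, ← Subtype.ext_iff]
  rw [(LinearEquiv.ofBijective restr ⟨hinj, hsurj⟩).finrank_eq, Module.finrank_prod,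
    Module.finrank_fintype_fun_eq_card, ← Nat.card_coe_set_eq, Nat.card_eq_fintype_card]
  rfl

lemma finrank_eq [FiniteDimensional k t] (R : RootVectors t ι) :
    Module.finrank k g = Module.finrank k t + Fintype.card ι := by
  rw [← R.decomp.finrank_eq, Module.finrank_prod, Module.finrank_fintype_fun_eq_card]

end RootVectors

lemma RootVectors.isNilpotent_ad_vec [IsAlgClosed k] [CharZero k] {g : Type*} [LieRing g]
    [LieAlgebra k g] [FiniteDimensional k g] {t : LieSubalgebra k g} {ι : Type*} [Fintype ι]
    (R : RootVectors t ι) (i : ι) : IsNilpotent (LieAlgebra.ad k g (R.vec i)) := by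
  have : IsLieAbelian t := ⟨fun h h' => Subtype.ext (R.lie_cartan h h')⟩
  refine LieAlgebra.isNilpotent_ad_of_mem_rootSpace t
    (DFunLike.coe_injective.ne_iff.mpr (R.root_ne_zero i)) ?_
  exact LieModule.weightSpace_le_genWeightSpace g _
    ((LieModule.mem_weightSpace _ _).mpr (R.lie_vec i))

end CV
end RootDecomposition

/-! ### Engel subalgebras and conjugacy of Cartan subalgebras -/

section Engel
open Module LieAlgebra LieSubalgebra
open scoped Topology
variable {k : Type*} [Field k] {g : Type*} [LieRing g] [LieAlgebra k g]

namespace CV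

lemma engel_lieEquiv (φ : g ≃ₗ⁅k⁆ g) (x : g) :
    (engel k (φ x)).toSubmodule = (engel k x).toSubmodule.map φ.toLinearEquiv.toLinearMap := by
  have hpow : ∀ (n : ℕ) (y : g), (ad k g (φ x) ^ n) (φ y) = φ ((ad k g x ^ n) y) := by
    intro n
    induction n with
    | zero => exact fun y => rfl
    | succ n ih =>
      intro y
      rw [pow_succ, End.mul_apply, ad_apply, ← LieEquiv.map_lie, ih, pow_succ, End.mul_apply,
        ad_apply]
  have hmem : ∀ y, φ y ∈ engel k (φ x) ↔ y ∈ engel k x := fun y => by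
    simp only [mem_engel_iff, hpow, map_eq_zero_iff φ φ.injective]
  ext y
  exact ⟨fun hy => ⟨φ.symm y, (hmem _).mp (by rwa [φ.apply_symm_apply]), φ.apply_symm_apply y⟩,
    by rintro ⟨z, hz, rfl⟩; exact (hmem z).mpr hz⟩

lemma mem_engel_of_lie_eq_zero {x y : g} (h : ⁅x, y⁆ = 0) : y ∈ engel k x :=
  (mem_engel_iff k x y).mpr ⟨1, by rwa [pow_one]⟩

lemma eq_zero_of_mem_engel_of_lie_eq_smul {x z : g} (hz : z ∈ engel k x) (hz0 : z ≠ 0) {a : k}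
    (ha : ⁅x, z⁆ = a • z) : a = 0 := by
  obtain ⟨m, hm⟩ := (mem_engel_iff k x z).mp hz
  have heigen : (ad k g x).HasEigenvector a z := ⟨End.mem_eigenspace_iff.mpr ha, hz0⟩
  rw [heigen.pow_apply] at hm
  exact eq_zero_of_pow_eq_zero ((smul_eq_zero.mp hm).resolve_right hz0)

lemma commute_ad_of_lie_eq_zero {a b : g} (h : ⁅a, b⁆ = 0) : Commute (ad k g a) (ad k g b) := by
  refine LinearMap.ext fun z => ?_
  simp only [End.mul_apply, ad_apply]
  rw [leibniz_lie, h, zero_lie, zero_add]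

lemma mem_engel_add_of_isNilpotent {h n z : g} (hhn : ⁅h, n⁆ = 0) (hn : IsNilpotent (ad k g n))
    (hz : ⁅h, z⁆ = 0) : z ∈ engel k (h + n) := by
  have hpow : ∀ m : ℕ, (ad k g (h + n) ^ m) z = (ad k g n ^ m) z := fun m => by
    induction m with
    | zero => rfl
    | succ m ih =>
      have hcomm := LinearMap.congr_fun ((commute_ad_of_lie_eq_zero (k := k) hhn).pow_right m).eq z
      rw [End.mul_apply, End.mul_apply, show ad k g h z = 0 from hz, map_zero] at hcomm
      rw [pow_succ', End.mul_apply, ih, map_add, LinearMap.add_apply, hcomm, zero_add,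
        ← End.mul_apply, ← pow_succ']
  obtain ⟨m, hm⟩ := hn
  exact (mem_engel_iff k _ z).mpr ⟨m, by rw [hpow, hm, LinearMap.zero_apply]⟩

lemma RootVectors.vec_mem_engel_iff {t : LieSubalgebra k g} {ι : Type*} [Fintype ι]
    (R : RootVectors t ι) (i : ι) (h : t) : R.vec i ∈ engel k (h : g) ↔ R.root i h = 0 :=
  ⟨fun hi => eq_zero_of_mem_engel_of_lie_eq_smul hi (R.vec_ne_zero i) (R.lie_vec i h),
    fun hi => mem_engel_of_lie_eq_zero (by rw [R.lie_vec, hi, zero_smul])⟩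

lemma RootVectors.le_engel {t : LieSubalgebra k g} {ι : Type*} [Fintype ι]
    (R : RootVectors t ι) (h : t) : t ≤ engel k (h : g) :=
  fun h' hh' => mem_engel_of_lie_eq_zero (R.lie_cartan h ⟨h', hh'⟩)

variable [FiniteDimensional k g]

lemma RootVectors.finrank_engel [Infinite k] {t : LieSubalgebra k g} {ι : Type*} [Fintype ι]
    (R : RootVectors t ι) (h : t) :
    finrank k (engel k (h : g)) = finrank k t + {i | R.root i h = 0}.ncard := by
  simp only [R.finrank_eq_add_ncard (R.le_engel h), R.vec_mem_engel_iff]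

lemma toSubmodule_engel (x : g) :
    (engel k x).toSubmodule = LinearMap.ker (ad k g x ^ finrank k g) := by
  change (ad k g x).maxGenEigenspace 0 = _
  rw [End.maxGenEigenspace_eq_genEigenspace_finrank, End.genEigenspace_nat, zero_smul, sub_zero]

lemma isOpen_finrank_engel_le (n : ℕ) :
    IsOpen[zar k g] {x : g | finrank k (engel k x) ≤ n} := by
  have hpoly : IsPolyMap k (fun x : g => ad k g x ^ finrank k g) :=
    (IsPolyMap.linearMap (ad k g : g →ₗ[k] End k g)).pow _
  refine (congrArg IsOpen[zar k g] (Set.ext fun x => ?_)).mpr (isOpen_finrank_ker_le hpoly n)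
  rw [Set.mem_ofPred_eq, Set.mem_ofPred_eq, ← toSubmodule_engel]
  rfl

lemma exists_isCartanSubalgebra_le_engel [Infinite k] (x : g) :
    ∃ t : LieSubalgebra k g, t.IsCartanSubalgebra ∧ t ≤ engel k x := by
  obtain ⟨z, hz, hmin⟩ := exists_minimalFor_of_wellFoundedLT
    (fun z : g => engel k z ≤ engel k x) (fun z => finrank k (engel k z)) ⟨x, le_rfl⟩
  refine ⟨engel k z, ⟨?_, normalizer_engel _ _⟩, hz⟩
  refine isNilpotent_of_forall_le_engel _ fun y hy => ?_
  let Ez : {E | ∃ w ∈ engel k z, engel k w = E} := ⟨engel k z, z, self_mem_engel _ _, rfl⟩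
  have hEz : IsMin Ez := by
    rintro ⟨_, w, hw, rfl⟩ (hle : engel k w ≤ engel k z)
    exact (toSubmodule_injective (Submodule.eq_of_le_of_finrank_le hle
      (hmin (hle.trans hz) (Submodule.finrank_mono hle)))).ge
  have hcard : (finrank k g : Cardinal) ≤ Cardinal.mk k :=
    Cardinal.natCast_le_aleph0.trans (Cardinal.infinite_iff.mp inferInstance)
  exact engel_isBot_of_isMin hcard _ Ez le_rfl hEz ⟨engel k y, y, hy, rfl⟩

end CV
end Engel

section CartanConjugacy
open Module LieAlgebra LieSubalgebra
open scoped Topology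
variable {k : Type*} [Field k] {g : Type*} [LieRing g] [LieAlgebra k g] [FiniteDimensional k g]

namespace CV

lemma isPolyMap_expProd_apply_coe (t : LieSubalgebra k g) {ι : Type*} [Fintype ι] (e : ι → g) :
    IsPolyMap k (fun w : t × (ι → k) => expProd e w.2 (w.1 : g)) :=
  ((isPolyMap_expProd e).comp (.linearMap (LinearMap.snd k t (ι → k)))).apply
    (.linearMap (t.incl.toLinearMap ∘ₗ LinearMap.fst k t (ι → k)))

variable [CharZero k]

lemma engel_adjointGroup {u : (End k g)ˣ} (hu : u ∈ adjointGroup k g) (x : g) :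
    (engel k ((u : End k g) x)).toSubmodule = (engel k x).toSubmodule.map (u : End k g) :=
  engel_lieEquiv (adjointEquiv hu) x

lemma finrank_map_adjointGroup {u : (End k g)ˣ} (hu : u ∈ adjointGroup k g) (p : Submodule k g) :
    finrank k (p.map (u : End k g)) = finrank k p :=
  (adjointEquiv hu).toLinearEquiv.finrank_map_eq p

variable [IsAlgClosed k] {t : LieSubalgebra k g} {ι : Type*} [Fintype ι]

lemma RootVectors.closure_range_expProd_vec (R : RootVectors t ι) :
    @closure g (zar k g) (Set.range fun w : t × (ι → k) => expProd R.vec w.2 (w.1 : g)) =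
      Set.univ := by
  let F : t × (ι → k) → g := fun w => expProd R.vec w.2 (w.1 : g)
  have hF : IsPolyMap k F := isPolyMap_expProd_apply_coe t R.vec
  obtain ⟨DF, hDFpoly, hDF⟩ := hF.exists_hasDifferential
  obtain ⟨D, -, hD⟩ := (isPolyMap_expProd (k := k) R.vec).exists_hasDifferential
  obtain ⟨h₁, hne, -⟩ := R.exists_regular
  have hDF_apply : ∀ h' b', DF (h₁, 0) (h', b') = ⁅∑ i, b' i • R.vec i, (h₁ : g)⁆ + h' := by
    intro h' b'
    have hjet := (hD (.line 0 b')).apply ((HasJet.line h₁ h').linearMap_comp t.incl.toLinearMap)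
    rw [(hDF (.line (h₁, 0) (h', b'))).velocity_unique (hjet.congr (fun _ => rfl) rfl rfl),
      differential_expProd_zero R.isNilpotent_ad_vec hD, expProd_zero]
    rfl
  refine closure_range_eq_univ_of_surjective hF hDF hDFpoly (w₀ := (h₁, 0)) fun x => ?_
  obtain ⟨h', c, rfl⟩ := R.exists_eq_add_sum x
  refine ⟨(h', fun i => -(R.root i h₁)⁻¹ * c i), ?_⟩
  rw [hDF_apply, add_comm, sum_lie]
  congr 1
  refine Finset.sum_congr rfl fun i _ => ?_
  rw [smul_lie, R.vec_lie, smul_smul]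
  congr 1
  field_simp [hne i]

lemma RootVectors.exists_isOpen_engel_eq_map (R : RootVectors t ι) :
    ∃ O, IsOpen[zar k g] O ∧ O.Nonempty ∧ ∀ x ∈ O, ∃ u ∈ adjointGroup k g,
      (engel k x).toSubmodule = t.toSubmodule.map (u : End k g) := by
  let _ := zar k g
  obtain ⟨O, hO, hOne, hOrange⟩ := exists_isOpen_subset_range
    (isPolyMap_expProd_apply_coe t R.vec) R.closure_range_expProd_vec
  obtain ⟨h₁, hne, -⟩ := R.exists_regular
  have hO' := isOpen_finrank_engel_le (k := k) (g := g) (finrank k t)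
  refine ⟨_, hO.inter hO', inter_nonempty_of_isOpen_zar hO hO' hOne ⟨h₁, ?_⟩, ?_⟩
  · simp [R.finrank_engel, hne]
  · rintro x ⟨hx, hxdim⟩
    obtain ⟨⟨h, b⟩, rfl⟩ := hOrange hx
    obtain ⟨u, hu, hub⟩ := exists_mem_adjointGroup_eq_expProd R.isNilpotent_ad_vec b
    change finrank k (engel k (expProd R.vec b (h : g))) ≤ finrank k t at hxdim
    change ∃ u ∈ adjointGroup k g, (engel k (expProd R.vec b (h : g))).toSubmodule = _
    rw [← hub] at hxdim ⊢
    refine ⟨u, hu, (Submodule.eq_of_le_of_finrank_le ?_ ?_).symm⟩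
    · exact (engel_adjointGroup hu _).symm ▸ Submodule.map_mono (R.le_engel h)
    · exact hxdim.trans_eq (finrank_map_adjointGroup hu _).symm

lemma RootVectors.exists_map_eq (R : RootVectors t ι) {t' : LieSubalgebra k g} {ι' : Type*}
    [Fintype ι'] (R' : RootVectors t' ι') :
    ∃ u ∈ adjointGroup k g, t'.toSubmodule.map (u : End k g) = t.toSubmodule := by
  obtain ⟨O, hO, hne, h⟩ := R.exists_isOpen_engel_eq_map
  obtain ⟨O', hO', hne', h'⟩ := R'.exists_isOpen_engel_eq_map
  obtain ⟨x, hx, hx'⟩ := inter_nonempty_of_isOpen_zar hO hO' hne hne'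
  obtain ⟨u, hu, hux⟩ := h x hx
  obtain ⟨u', hu', hux'⟩ := h' x hx'
  refine ⟨u⁻¹ * u', mul_mem (inv_mem hu) hu', ?_⟩
  rw [Units.val_mul, End.mul_eq_comp, Submodule.map_comp, ← hux', hux, ← Submodule.map_comp,
    ← End.mul_eq_comp, Units.inv_mul]
  exact Submodule.map_id _

end CV
end CartanConjugacy

/-! ### Irregular pairs with small Engel subalgebra -/

section SmallEngel
open Module LieAlgebra LieSubalgebra
variable {k : Type*} [Field k]

namespace CV

lemma apply_mul_apply_comm_of_finrank_le {V V' : Type*} [AddCommGroup V] [Module k V]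
    [AddCommGroup V'] [Module k V'] {E : Submodule k V} [FiniteDimensional k E] {A : V →ₗ[k] V'}
    (h : finrank k E ≤ finrank k ↥(E ⊓ LinearMap.ker A) + 1) {u v : V} (hu : u ∈ E) (hv : v ∈ E)
    (φ ψ : Dual k V') : φ (A u) * ψ (A v) = ψ (A u) * φ (A v) := by
  have hker : finrank k (LinearMap.ker (A.domRestrict E)) = finrank k ↥(E ⊓ LinearMap.ker A) := by
    rw [LinearMap.ker_domRestrict, ← Submodule.map_comap_subtype, Submodule.finrank_map_subtype_eq]
  have hrange : finrank k (LinearMap.range (A.domRestrict E)) ≤ 1 := by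
    have := (A.domRestrict E).finrank_range_add_finrank_ker
    lia
  obtain ⟨w, hw⟩ := finrank_le_one_iff.mp hrange
  obtain ⟨a, ha⟩ := hw ⟨A u, ⟨u, hu⟩, rfl⟩
  obtain ⟨b, hb⟩ := hw ⟨A v, ⟨v, hv⟩, rfl⟩
  rw [← show a • (w : V') = A u from congrArg Subtype.val ha,
    ← show b • (w : V') = A v from congrArg Subtype.val hb]
  simp only [map_smul, smul_eq_mul]
  ring

namespace RootVectors
variable {g : Type*} [LieRing g] [LieAlgebra k g] {t E : LieSubalgebra k g}
variable {ι : Type*} [Fintype ι] (R : RootVectors t ι)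

lemma exists_eq_add_smul_add_smul [Infinite k] (htE : t ≤ E) {i j : ι}
    (hE : ∀ l, R.vec l ∈ E → l = i ∨ l = j) {x : g} (hx : x ∈ E) :
    ∃ (h : t) (c d : k), x = h + c • R.vec i + d • R.vec j := by
  classical
  have hsum : ∑ l, R.coeff l x • R.vec l = ∑ l ∈ ({i, j} : Finset ι), R.coeff l x • R.vec l := by
    refine (Finset.sum_subset (Finset.subset_univ _) fun l _ hl => ?_).symm
    by_contra hne
    exact hl (by simpa using hE l (R.vec_mem_of_coeff_ne_zero htE hx (left_ne_zero_of_smul hne)))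
  have hx' := R.cartanPart_add_sum_coeff x
  rw [hsum] at hx'
  obtain rfl | hij := eq_or_ne i j
  · exact ⟨R.cartanPart x, R.coeff i x, 0, by simpa using hx'.symm⟩
  · rw [Finset.sum_pair hij, ← add_assoc] at hx'
    exact ⟨R.cartanPart x, R.coeff i x, R.coeff j x, hx'.symm⟩

lemma exists_forall_vec_mem [Infinite k] [FiniteDimensional k t] (htE : t ≤ E)
    (hdim : finrank k E ≤ finrank k t + 2) {i : ι} (hi : R.vec i ∈ E) :
    ∃ j, R.vec j ∈ E ∧ ∀ l, R.vec l ∈ E → l = i ∨ l = j := by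
  have hcard : {l | R.vec l ∈ E}.ncard ≤ 2 := by
    have := R.finrank_eq_add_ncard htE
    lia
  by_cases hall : ∃ j, R.vec j ∈ E ∧ j ≠ i
  · obtain ⟨j, hj, hji⟩ := hall
    have hsub : {i, j} ⊆ {l | R.vec l ∈ E} := Set.pair_subset hi hj
    have heq := Set.eq_of_subset_of_ncard_le hsub (by rwa [Set.ncard_pair hji.symm])
    exact ⟨j, hj, fun l hl => by simpa using heq.ge hl⟩
  · push Not at hall
    exact ⟨i, hi, fun l hl => .inl (hall l hl)⟩

-- If `[e_i, e_j] ≠ 0`, it spans a third root space contained in `E`.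
lemma lie_vec_vec_eq_zero [Infinite k] {i j : ι} (hi : R.vec i ∈ E) (hj : R.vec j ∈ E)
    (hE : ∀ l, R.vec l ∈ E → l = i ∨ l = j) (hji : j ≠ R.neg i) : ⁅R.vec i, R.vec j⁆ = 0 := by
  by_contra hne
  have hsum : R.root i + R.root j ≠ 0 := fun h0 =>
    hji (R.root_injective (by rw [R.root_neg, eq_neg_of_add_eq_zero_right h0]))
  obtain ⟨l, hl, c, hc⟩ := R.exists_eq_smul_of_lie_eq_smul hsum hne fun h => by
    rw [leibniz_lie, R.lie_vec, R.lie_vec, smul_lie, lie_smul, LinearMap.add_apply, add_smul]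
  have hc0 : c ≠ 0 := left_ne_zero_of_smul (hc ▸ hne)
  have hlE : R.vec l ∈ E := (E.toSubmodule.smul_mem_iff hc0).mp (hc ▸ E.lie_mem hi hj)
  rcases hE l hlE with rfl | rfl
  · exact R.root_ne_zero j (by simpa using hl)
  · exact R.root_ne_zero i (by simpa using hl)

variable [IsAlgClosed k] [CharZero k] [FiniteDimensional k g]

lemma vec_neg_mem_engel {x : g} (htx : t ≤ engel k x)
    (hdim : finrank k (engel k x) ≤ finrank k t + 2) {i : ι} (hi : R.vec i ∈ engel k x) :
    R.vec (R.neg i) ∈ engel k x := by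
  obtain ⟨j, hj, hE⟩ := R.exists_forall_vec_mem htx hdim hi
  obtain rfl | hji := eq_or_ne j (R.neg i)
  · exact hj
  have hij : ⁅R.vec i, R.vec j⁆ = 0 := R.lie_vec_vec_eq_zero hi hj hE hji
  have hji : ⁅R.vec j, R.vec i⁆ = 0 := by rw [← lie_skew, hij, neg_zero]
  obtain ⟨h, c, d, hx⟩ := R.exists_eq_add_smul_add_smul htx hE (self_mem_engel k x)
  have hri : R.root i h = 0 := eq_zero_of_mem_engel_of_lie_eq_smul hi (R.vec_ne_zero i) <| by
    rw [hx, add_lie, add_lie, R.lie_vec, smul_lie, smul_lie, hji, lie_self]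
    simp
  have hrj : R.root j h = 0 := eq_zero_of_mem_engel_of_lie_eq_smul hj (R.vec_ne_zero j) <| by
    rw [hx, add_lie, add_lie, R.lie_vec, smul_lie, smul_lie, hij, lie_self]
    simp
  have hnil : IsNilpotent (ad k g (c • R.vec i + d • R.vec j)) := by
    rw [map_add, map_smul, map_smul]
    exact (((commute_ad_of_lie_eq_zero hij).smul_left c).smul_right d).isNilpotent_add
      ((R.isNilpotent_ad_vec i).smul c) ((R.isNilpotent_ad_vec j).smul d)
  rw [hx, add_assoc]
  refine mem_engel_add_of_isNilpotent ?_ hnil ?_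
  · simp [R.lie_vec, hri, hrj]
  · simp [R.lie_vec, R.root_neg, hri]

-- The restriction of `ad p` to `E` has rank at most one, so its `2 × 2` minors on `e_i`, `e_{-i}`
-- and the coroot vanish.
lemma mem_kerRoot_of_lt_finrank_inf_cent (htE : t ≤ E) (hdim : finrank k E ≤ finrank k t + 2)
    {i : ι} (hi : R.vec i ∈ E) (hE : ∀ l, R.vec l ∈ E → l = i ∨ l = R.neg i)
    (hi' : R.vec (R.neg i) ∈ E) {p : g} (hp : p ∈ E)
    (hcent : finrank k t < finrank k ↥(E.toSubmodule ⊓ cent k p)) :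
    p ∈ kerRoot k g t (R.root i) := by
  classical
  obtain ⟨h, c, d, hpE⟩ := R.exists_eq_add_smul_add_smul htE hE hp
  have hminor {u v : g} (hu : u ∈ E) (hv : v ∈ E) (φ ψ : Dual k g) :
      φ ⁅p, u⁆ * ψ ⁅p, v⁆ = ψ ⁅p, u⁆ * φ ⁅p, v⁆ :=
    apply_mul_apply_comm_of_finrank_le (E := E.toSubmodule) (A := ad k g p)
      (hdim.trans (Nat.succ_le_succ hcent)) hu hv φ ψ
  have hlie : ⁅p, R.vec i⁆ = R.root i h • R.vec i + -d • (R.coroot i : g) := by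
    rw [hpE, add_lie, add_lie, R.lie_vec, smul_lie, smul_lie, lie_self,
      ← lie_skew (R.vec (R.neg i)), R.lie_vec_neg]
    module
  have hlie_neg : ⁅p, R.vec (R.neg i)⁆ =
      -R.root i h • R.vec (R.neg i) + c • (R.coroot i : g) := by
    rw [hpE, add_lie, add_lie, R.lie_vec, smul_lie, smul_lie, lie_self, R.lie_vec_neg, R.root_neg,
      LinearMap.neg_apply]
    module
  have hlie_coroot : ⁅p, (R.coroot i : g)⁆ = -(c * R.root i (R.coroot i)) • R.vec i +
      (d * R.root i (R.coroot i)) • R.vec (R.neg i) := by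
    rw [hpE, add_lie, add_lie, R.lie_cartan, smul_lie, smul_lie, R.vec_lie, R.vec_lie, R.root_neg,
      LinearMap.neg_apply]
    module
  have hcoroot : (R.coroot i : g) ∈ E := htE (R.coroot i).2
  have hs := R.root_coroot_ne_zero i
  have hne := R.neg_ne i
  have hr : R.root i h = 0 := by
    simpa [hlie, hlie_neg, R.coeff_vec, R.coeff_coe, hne, hne.symm]
      using hminor hi hi' (R.coeff i) (R.coeff (R.neg i))
  have hc : c = 0 := by
    simpa [hlie_neg, hlie_coroot, R.coeff_vec, R.coeff_coe, R.cartanPart_vec, R.cartanPart_coe, hne,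
      hne.symm, hs] using hminor hi' hcoroot (R.root i ∘ₗ R.cartanPart) (R.coeff i)
  have hd : d = 0 := by
    simpa [hlie, hlie_coroot, R.coeff_vec, R.coeff_coe, R.cartanPart_vec, R.cartanPart_coe, hne,
      hne.symm, hs] using hminor hi hcoroot (R.root i ∘ₗ R.cartanPart) (R.coeff (R.neg i))
  exact ⟨h, hr, by simp [hpE, hc, hd]⟩

lemma exists_mem_kerRoot {x y : g} (hxy : ⁅x, y⁆ = 0) (htx : t ≤ engel k x)
    (hdim : finrank k (engel k x) ≤ finrank k t + 2)
    (hirr : finrank k t < finrank k ↥(cent k x ⊓ cent k y)) :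
    ∃ i, x ∈ kerRoot k g t (R.root i) ∧ y ∈ kerRoot k g t (R.root i) := by
  have hcent : cent k x ≤ (engel k x).toSubmodule := fun z hz => mem_engel_of_lie_eq_zero hz
  obtain ⟨i, hi⟩ : ∃ i, R.vec i ∈ engel k x := by
    by_contra! hnone
    have hfinrank := R.finrank_eq_add_ncard htx
    simp only [hnone, Set.ofPred_false, Set.ncard_empty, add_zero] at hfinrank
    exact (hirr.trans_le (Submodule.finrank_mono (inf_le_left.trans hcent))).ne' hfinrank
  have hi' := R.vec_neg_mem_engel htx hdim hi
  obtain ⟨j, -, hj⟩ := R.exists_forall_vec_mem htx hdim hi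
  obtain rfl : R.neg i = j := (hj _ hi').resolve_left (R.neg_ne i)
  refine ⟨i, R.mem_kerRoot_of_lt_finrank_inf_cent htx hdim hi hj hi' (self_mem_engel k x) ?_,
    R.mem_kerRoot_of_lt_finrank_inf_cent htx hdim hi hj hi' (mem_engel_of_lie_eq_zero hxy) ?_⟩
  · exact hirr.trans_le (Submodule.finrank_mono (le_inf (inf_le_left.trans hcent) inf_le_left))
  · exact hirr.trans_le (Submodule.finrank_mono (inf_le_inf_right _ hcent))

end RootVectors

variable [CharZero k] {g : Type*} [LieRing g] [LieAlgebra k g] [FiniteDimensional k g]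

lemma map_cent_inf_cent_le {u : (End k g)ˣ} (hu : u ∈ adjointGroup k g) (x y : g) :
    (cent k x ⊓ cent k y).map (u : End k g) ≤
      cent k ((u : End k g) x) ⊓ cent k ((u : End k g) y) := by
  rintro _ ⟨v, ⟨hx : ⁅x, v⁆ = 0, hy : ⁅y, v⁆ = 0⟩, rfl⟩
  constructor
  · change ⁅(u : End k g) x, (u : End k g) v⁆ = 0
    rw [← adjointGroup_lie hu, hx, map_zero]
  · change ⁅(u : End k g) y, (u : End k g) v⁆ = 0
    rw [← adjointGroup_lie hu, hy, map_zero]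

lemma exists_mem_adTranslates_kerRoot [IsAlgClosed k] (hred : radical k g = center k g)
    {t : LieSubalgebra k g} {ι : Type*} [Fintype ι] (R : RootVectors t ι) {z : g × g}
    (hz : z ∈ Cirr k g t) (hdim : finrank k (engel k z.1) ≤ finrank k t + 2) :
    ∃ i, z ∈ adTranslates k g
      ((kerRoot k g t (R.root i) : Set g) ×ˢ (kerRoot k g t (R.root i) : Set g)) := by
  obtain ⟨x, y⟩ := z
  obtain ⟨hxy : ⁅x, y⁆ = 0, hirr⟩ := hz
  obtain ⟨t', ht', hle⟩ := exists_isCartanSubalgebra_le_engel (k := k) x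
  obtain ⟨_, _, ⟨R'⟩⟩ := exists_rootVectors hred ht'
  obtain ⟨u, hu, hut⟩ := R.exists_map_eq R'
  obtain ⟨i, hx, hy⟩ := R.exists_mem_kerRoot (x := (u : End k g) x) (y := (u : End k g) y)
    (by rw [← adjointGroup_lie hu, hxy, map_zero])
    (by
      change t.toSubmodule ≤ (engel k ((u : End k g) x)).toSubmodule
      rw [engel_adjointGroup hu, ← hut]
      exact Submodule.map_mono hle)
    (by
      change finrank k (engel k ((u : End k g) x)).toSubmodule ≤ _
      rw [engel_adjointGroup hu, finrank_map_adjointGroup hu]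
      exact hdim)
    (hirr.trans_le ((finrank_map_adjointGroup hu _).symm.trans_le
      (Submodule.finrank_mono (map_cent_inf_cent_le hu x y))))
  refine ⟨i, u⁻¹, inv_mem hu, (_, _), ⟨hx, hy⟩, ?_⟩
  simp only [← End.mul_apply, Units.inv_mul, End.one_apply]

end CV
end SmallEngel

/-! ### The sweep of `Ker α × Ker α` by the adjoint group -/

section AdjointFlow
open Module LieAlgebra
variable {k : Type*} [Field k] {g : Type*} [LieRing g] [LieAlgebra k g]

namespace CV

lemma commute_expEnd_smul (s : k) (f : End k g) : Commute (expEnd k g (s • f)) f :=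
  Commute.sum_left _ _ _ fun _ _ => (((Commute.refl f).smul_left s).pow_left _).smul_left _

variable [CharZero k] [FiniteDimensional k g]

lemma hasJet_expEnd_smul_ad_apply {x : g} (hx : IsNilpotent (ad k g x)) (s : k) (z : g) :
    HasJet (fun s' : k => expEnd k g ((s + s') • ad k g x) z) (expEnd k g (s • ad k g x) z)
      ⁅x, expEnd k g (s • ad k g x) z⁆ := by
  refine ((hasJet_expEnd_smul hx s 1).apply (.const z)).congr (fun s' => by rw [mul_one]) rfl ?_
  rw [one_smul, (commute_expEnd_smul s (ad k g x)).eq, map_zero, add_zero]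
  rfl

lemma adjointGroup_mem_of_forall_expEnd_mem {S : Set (g × g)}
    (hS : ∀ x : g, IsNilpotent (ad k g x) → ∀ p ∈ S,
      (expEnd k g (ad k g x) p.1, expEnd k g (ad k g x) p.2) ∈ S)
    {u : (End k g)ˣ} (hu : u ∈ adjointGroup k g) {p : g × g} (hp : p ∈ S) :
    ((u : End k g) p.1, (u : End k g) p.2) ∈ S := by
  induction hu using Subgroup.closure_induction'' generalizing p with
  | mem _ hu =>
    obtain ⟨x, hx, hux⟩ := hu
    exact hux ▸ hS x hx p hp
  | inv_mem u hu =>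
    obtain ⟨x, hx, hux⟩ := hu
    have hinv : ((u⁻¹ : (End k g)ˣ) : End k g) = expEnd k g (ad k g (-x)) := by
      rw [Units.inv_eq_of_mul_eq_one_right, map_neg]
      rw [hux]
      exact expEnd_mul_expEnd_neg hx
    exact hinv ▸ hS (-x) (by rw [map_neg]; exact hx.neg) p hp
  | one => exact hp
  | mul _ _ _ _ hu hv => exact hu (hv hp)

end CV
end AdjointFlow

section Sweep
open Module LieAlgebra
open scoped Topology
variable {k : Type*} [Field k] {g : Type*} [LieRing g] [LieAlgebra k g]
variable {t : LieSubalgebra k g} {ι : Type*} [Fintype ι]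

namespace CV.RootVectors

/-- The indices of the roots different from `± R.root i`. -/
def OtherIndex (R : RootVectors t ι) (i : ι) : Type _ := {j : ι // j ≠ i ∧ j ≠ R.neg i}

instance (R : RootVectors t ι) (i : ι) : Finite (R.OtherIndex i) := Subtype.finite

instance (R : RootVectors t ι) (i : ι) : Fintype (R.OtherIndex i) := Fintype.ofFinite _

/-- The root vectors for the roots different from `± R.root i`. -/
def otherVec (R : RootVectors t ι) (i : ι) (j : R.OtherIndex i) : g := R.vec j.1

/-- The kernel of the root `R.root i`, as a subspace of `g`. -/
abbrev ker (R : RootVectors t ι) (i : ι) : Submodule k g := kerRoot k g t (R.root i)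

/-- The domain of the parametrization `RootVectors.sweep`. -/
abbrev SweepDomain (R : RootVectors t ι) (i : ι) : Type _ :=
  (R.OtherIndex i → k) × R.ker i × R.ker i

variable (R : RootVectors t ι) (i : ι)

lemma card_otherIndex_add_two [CharZero k] :
    Fintype.card (R.OtherIndex i) + 2 = Fintype.card ι := by
  have hcompl : {j | j ≠ i ∧ j ≠ R.neg i} = {i, R.neg i}ᶜ := by ext; simp
  have hcard : Nat.card (R.OtherIndex i) = ({i, R.neg i}ᶜ : Set ι).ncard :=
    congrArg Set.ncard hcompl
  rw [← Nat.card_eq_fintype_card, ← Nat.card_eq_fintype_card, hcard,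
    ← Set.ncard_pair (R.neg_ne i).symm, add_comm, Set.ncard_add_ncard_compl]

lemma finrank_ker_add_one [FiniteDimensional k t] : finrank k (R.ker i) + 1 = finrank k t := by
  have hmap : finrank k (R.ker i) = finrank k (LinearMap.ker (R.root i)) :=
    (Submodule.equivMapOfInjective t.incl.toLinearMap Subtype.val_injective _).symm.finrank_eq
  rw [hmap, Dual.finrank_ker_add_one_of_ne_zero (R.root_ne_zero i)]

lemma exists_forall_mem_ker_lie_eq (a : g) :
    ∃ b : R.OtherIndex i → k, ∀ z ∈ R.ker i, ⁅a, z⁆ = ⁅∑ j, b j • R.otherVec i j, z⁆ := by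
  classical
  obtain ⟨h, c, rfl⟩ := R.exists_eq_add_sum a
  refine ⟨fun j => c j.1, ?_⟩
  rintro _ ⟨z, hz : R.root i z = 0, rfl⟩
  change ⁅_, (z : g)⁆ = ⁅_, (z : g)⁆
  rw [add_lie, R.lie_cartan, zero_add, sum_lie, sum_lie]
  refine (Finset.sum_of_injOn Subtype.val Subtype.val_injective.injOn (by simp) ?_
    fun j _ => rfl).symm
  intro j _ hj
  have hroot : R.root j z = 0 := by
    by_contra hne
    have hother : j ≠ i ∧ j ≠ R.neg i → False := fun h =>
      hj ⟨_, Finset.mem_coe.mpr (Finset.mem_univ (α := R.OtherIndex i) ⟨j, h⟩), rfl⟩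
    refine hother ⟨?_, ?_⟩ <;> rintro rfl
    · exact hne hz
    · exact hne (by rw [R.root_neg, LinearMap.neg_apply, hz, neg_zero])
  rw [smul_lie, R.vec_lie, hroot, neg_zero, zero_smul, smul_zero]

lemma coeff_sum_otherVec [Infinite k] (b : R.OtherIndex i → k) (j : R.OtherIndex i) :
    R.coeff j.1 (∑ l, b l • R.otherVec i l) = b j := by
  classical
  have hcoeff (l : R.OtherIndex i) : R.coeff j.1 (R.otherVec i l) = if j = l then 1 else 0 :=
    (R.coeff_vec l.1 j.1).trans (if_congr Subtype.ext_iff.symm rfl rfl)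
  simp [hcoeff]

/-- The differential of the sweep at `(0, c, d)`. -/
def tangentMap (c d : R.ker i) : R.SweepDomain i →ₗ[k] g × g :=
  let act (z : R.ker i) : R.SweepDomain i →ₗ[k] g :=
    -ad k g (z : g) ∘ₗ Fintype.linearCombination k (R.otherVec i) ∘ₗ LinearMap.fst k _ _
  (act c + (R.ker i).subtype ∘ₗ LinearMap.fst k _ _ ∘ₗ LinearMap.snd k _ _).prod
    (act d + (R.ker i).subtype ∘ₗ LinearMap.snd k _ _ ∘ₗ LinearMap.snd k _ _)

lemma tangentMap_apply (c d : R.ker i) (w : R.SweepDomain i) :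
    R.tangentMap i c d w = (⁅∑ j, w.1 j • R.otherVec i j, (c : g)⁆ + w.2.1,
      ⁅∑ j, w.1 j • R.otherVec i j, (d : g)⁆ + w.2.2) := by
  rw [← lie_skew, ← lie_skew _ (d : g), ← Fintype.linearCombination_apply]
  rfl

lemma exists_injective_tangentMap [Infinite k] :
    ∃ c, Function.Injective (R.tangentMap i c c) := by
  obtain ⟨h, hi, hother⟩ := R.exists_root_eq_zero_forall_root_ne_zero i
  refine ⟨⟨h, h, hi, rfl⟩, (injective_iff_map_eq_zero _).mpr ?_⟩
  rintro ⟨b, c, d⟩ h0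
  rw [tangentMap_apply] at h0
  obtain ⟨hc, hd⟩ := Prod.mk.inj h0
  obtain ⟨c', -, hc'⟩ := c.2
  have hb : b = 0 := by
    funext j
    have hcoeff := congrArg (R.coeff j.1) hc
    rw [← lie_skew, ← hc'] at hcoeff
    change R.coeff j.1 (-⁅(h : g), _⁆ + (c' : g)) = _ at hcoeff
    rw [map_add, map_neg, R.coeff_lie, R.coeff_coe, R.coeff_sum_otherVec, map_zero, add_zero,
      neg_eq_zero] at hcoeff
    exact (mul_eq_zero.mp hcoeff).resolve_left (hother j.1 j.2.1 j.2.2)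
  subst hb
  have hc0 : c = 0 := Subtype.ext (by simpa using hc)
  have hd0 : d = 0 := Subtype.ext (by simpa using hd)
  rw [hc0, hd0]
  rfl

variable [FiniteDimensional k g]

lemma finrank_sweepDomain_add_four [CharZero k] :
    finrank k (R.SweepDomain i) + 4 = finrank k g + finrank k t := by
  have hker := R.finrank_ker_add_one i
  have hcard := R.card_otherIndex_add_two i
  rw [R.finrank_eq, finrank_prod, finrank_prod, finrank_fintype_fun_eq_card]
  lia

/-- The polynomial map `(b, x, y) ↦ (u x, u y)`, where `u` is the product of the exponentials
`exp (b j • ad (R.vec j))` over the roots different from `± R.root i`; it parametrizes a dense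
subset of the translates of `R.ker i × R.ker i`. -/
def sweep (w : R.SweepDomain i) : g × g :=
  (expProd (R.otherVec i) w.1 w.2.1, expProd (R.otherVec i) w.1 w.2.2)

lemma isPolyMap_sweep : IsPolyMap k (R.sweep i) := by
  have hexp : IsPolyMap k fun w : R.SweepDomain i => expProd (k := k) (R.otherVec i) w.1 :=
    (isPolyMap_expProd _).comp
      (.linearMap (LinearMap.fst k (R.OtherIndex i → k) (R.ker i × R.ker i)))
  have hpair : IsPolyMap k fun w : R.SweepDomain i => w.2 :=
    .linearMap (LinearMap.snd k (R.OtherIndex i → k) (R.ker i × R.ker i))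
  have hfst : IsPolyMap k fun w : R.SweepDomain i => (w.2.1 : g) :=
    hpair.linearMap_comp ((R.ker i).subtype ∘ₗ LinearMap.fst k (R.ker i) (R.ker i))
  have hsnd : IsPolyMap k fun w : R.SweepDomain i => (w.2.2 : g) :=
    hpair.linearMap_comp ((R.ker i).subtype ∘ₗ LinearMap.snd k (R.ker i) (R.ker i))
  exact (hexp.apply hfst).prodMk (hexp.apply hsnd)

/-- The closure of the translates of `R.ker i × R.ker i` under the adjoint group. -/
def component : Set (g × g) :=
  @closure _ (zar k (g × g)) (adTranslates k g ((R.ker i : Set g) ×ˢ (R.ker i : Set g)))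

lemma isClosed_component : IsClosed[zar k (g × g)] (R.component i) :=
  @isClosed_closure _ (zar k (g × g)) _

variable [CharZero k] {R i} {D : (R.OtherIndex i → k) → (R.OtherIndex i → k) →ₗ[k] End k g}
  {DΦ : R.SweepDomain i → R.SweepDomain i →ₗ[k] g × g}

lemma differential_sweep_eq (hD : HasDifferential (expProd (R.otherVec i)) D)
    (hDΦ : HasDifferential (R.sweep i) DΦ) (w w' : R.SweepDomain i) :
    DΦ w w' = (D w.1 w'.1 w.2.1 + expProd (R.otherVec i) w.1 w'.2.1,
      D w.1 w'.1 w.2.2 + expProd (R.otherVec i) w.1 w'.2.2) := by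
  have hjet (z z' : R.ker i) :=
    (hD (.line w.1 w'.1)).apply ((HasJet.line z z').linearMap_comp (R.ker i).subtype)
  exact (hDΦ (.line w w')).velocity_unique
    (((hjet w.2.1 w'.2.1).prodMk (hjet w.2.2 w'.2.2)).congr (fun _ => rfl) rfl rfl)

variable [IsAlgClosed k]

variable (R i) in
lemma isNilpotent_ad_otherVec (j : R.OtherIndex i) : IsNilpotent (ad k g (R.otherVec i j)) :=
  R.isNilpotent_ad_vec j.1

lemma differential_sweep_zero (hDΦ : HasDifferential (R.sweep i) DΦ) (c d : R.ker i) :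
    DΦ (0, c, d) = R.tangentMap i c d := by
  obtain ⟨D, -, hD⟩ := (isPolyMap_expProd (k := k) (R.otherVec i)).exists_hasDifferential
  refine LinearMap.ext fun w => ?_
  rw [differential_sweep_eq hD hDΦ, tangentMap_apply, expProd_zero,
    differential_expProd_zero (R.isNilpotent_ad_otherVec i) hD]
  rfl

lemma range_differential_sweep_le (hDΦ : HasDifferential (R.sweep i) DΦ)
    (w : R.SweepDomain i) :
    LinearMap.range (DΦ w) ≤ (LinearMap.range (R.tangentMap i w.2.1 w.2.2)).map
      ((expProd (R.otherVec i) w.1).prodMap (expProd (R.otherVec i) w.1)) := by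
  obtain ⟨D, -, hD⟩ := (isPolyMap_expProd (k := k) (R.otherVec i)).exists_hasDifferential
  rintro _ ⟨w', rfl⟩
  obtain ⟨a, ha⟩ :=
    exists_differential_expProd_eq (R.isNilpotent_ad_otherVec i) hD w.1 w'.1
  obtain ⟨b, hb⟩ := R.exists_forall_mem_ker_lie_eq i a
  refine ⟨_, ⟨(b, w'.2), rfl⟩, ?_⟩
  rw [differential_sweep_eq hD hDΦ, ha, tangentMap_apply, ← hb _ w.2.1.2, ← hb _ w.2.2.2]
  simp only [LinearMap.prodMap_apply, map_add, End.mul_apply, ad_apply]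

-- Both sides of `range_differential_sweep_le` have the dimension of the domain.
lemma lie_sweep_mem_range_differential (hDΦ : HasDifferential (R.sweep i) DΦ)
    {w : R.SweepDomain i} (hinj : Function.Injective (DΦ w)) (x : g) :
    (⁅x, (R.sweep i w).1⁆, ⁅x, (R.sweep i w).2⁆) ∈ LinearMap.range (DΦ w) := by
  have hrange := Submodule.eq_of_le_of_finrank_le (range_differential_sweep_le hDΦ w) <| by
    rw [LinearMap.finrank_range_of_inj hinj]
    exact (Submodule.finrank_map_le _ _).trans (LinearMap.finrank_range_le _)
  obtain ⟨u, hu, huw⟩ :=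
    exists_mem_adjointGroup_eq_expProd (R.isNilpotent_ad_otherVec i) w.1
  obtain ⟨b, hb⟩ := R.exists_forall_mem_ker_lie_eq i ((u⁻¹ : (End k g)ˣ).1 x)
  have hconj (z : R.ker i) : expProd (R.otherVec i) w.1 ⁅∑ j, b j • R.otherVec i j, (z : g)⁆ =
      ⁅x, expProd (R.otherVec i) w.1 z⁆ := by
    rw [← hb z z.2, ← huw, adjointGroup_lie hu, ← End.mul_apply, Units.mul_inv, End.one_apply]
  rw [hrange]
  refine ⟨_, ⟨(b, 0, 0), rfl⟩, ?_⟩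
  rw [tangentMap_apply]
  simp only [Submodule.coe_zero, add_zero]
  exact Prod.ext (hconj _) (hconj _)

variable (R i)

lemma exists_differential_sweep :
    ∃ DΦ : R.SweepDomain i → R.SweepDomain i →ₗ[k] g × g,
      IsPolyMap k DΦ ∧ HasDifferential (R.sweep i) DΦ ∧ ∃ w, Function.Injective (DΦ w) := by
  obtain ⟨DΦ, hpoly, hDΦ⟩ := (R.isPolyMap_sweep i).exists_hasDifferential
  obtain ⟨c, hc⟩ := R.exists_injective_tangentMap i
  exact ⟨DΦ, hpoly, hDΦ, (0, c, c), by rwa [differential_sweep_zero hDΦ]⟩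

lemma expEnd_ad_mem_closure_range_sweep {x : g} (hx : IsNilpotent (ad k g x)) {p : g × g}
    (hp : p ∈ @closure _ (zar k (g × g)) (Set.range (R.sweep i))) :
    (expEnd k g (ad k g x) p.1, expEnd k g (ad k g x) p.2) ∈
      @closure _ (zar k (g × g)) (Set.range (R.sweep i)) := by
  obtain ⟨DΦ, hpoly, hDΦ, w₀, hw₀⟩ := R.exists_differential_sweep i
  have hexp : IsPolyMap k fun s : k => expEnd k g (s • ad k g x) :=
    isPolyMap_expEnd.comp (IsPolyMap.id.smul (.const _))
  have hflow := mem_closure_range_of_integralCurve (R.isPolyMap_sweep i) hDΦ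
    (A := fun p => (⁅x, p.1⁆, ⁅x, p.2⁆)) (.linearMap ((ad k g x).prodMap (ad k g x)))
    (isOpen_injective hpoly) ⟨w₀, hw₀⟩
    (fun w hw => lie_sweep_mem_range_differential hDΦ hw x)
    (Γ := fun s => (expEnd k g (s • ad k g x) p.1, expEnd k g (s • ad k g x) p.2))
    ((hexp.apply (.const p.1)).prodMk (hexp.apply (.const p.2)))
    (fun s => (hasJet_expEnd_smul_ad_apply hx s p.1).prodMk
      (hasJet_expEnd_smul_ad_apply hx s p.2))
    (by simpa [expEnd_zero] using hp) 1
  simpa only [one_smul] using hflow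

lemma component_eq_closure_range_sweep :
    R.component i = @closure _ (zar k (g × g)) (Set.range (R.sweep i)) := by
  let _ := zar k (g × g)
  refine subset_antisymm (closure_minimal ?_ isClosed_closure) (closure_mono ?_)
  · rintro _ ⟨u, hu, ⟨c, d⟩, ⟨hc, hd⟩, rfl⟩
    refine adjointGroup_mem_of_forall_expEnd_mem (p := (c, d))
      (fun x hx p => R.expEnd_ad_mem_closure_range_sweep i hx) hu (subset_closure ?_)
    exact ⟨(0, ⟨c, hc⟩, ⟨d, hd⟩), by simp [sweep, expProd_zero]⟩
  · rintro _ ⟨w, rfl⟩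
    obtain ⟨u, hu, huw⟩ :=
      exists_mem_adjointGroup_eq_expProd (R.isNilpotent_ad_otherVec i) w.1
    exact ⟨u, hu, (w.2.1, w.2.2), ⟨w.2.1.2, w.2.2.2⟩, by rw [huw]; rfl⟩

lemma isIrreducible_component : @IsIrreducible _ (zar k (g × g)) (R.component i) := by
  let _ := zar k (g × g)
  rw [component_eq_closure_range_sweep]
  exact (R.isPolyMap_sweep i).isIrreducible_range.closure

lemma dimSet_component : dimSet k (g × g) (R.component i) = finrank k (R.SweepDomain i) := by
  obtain ⟨DΦ, hpoly, hDΦ, w₀, hw₀⟩ := R.exists_differential_sweep i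
  rw [component_eq_closure_range_sweep]
  exact dimSet_closure_range (R.isPolyMap_sweep i) hDΦ hpoly hw₀

end CV.RootVectors
end Sweep

/-! ### The irreducible components of the irregular locus -/

section IrregularLocus
open Module LieAlgebra LieSubalgebra
open scoped Topology
variable {k : Type*} [Field k] {g : Type*} [LieRing g] [LieAlgebra k g] [FiniteDimensional k g]
variable {t : LieSubalgebra k g}

namespace CV

lemma isClosed_commSet : IsClosed[zar k (g × g)] (commSet k g) :=
  (IsPolyMap.bilin (ad k g : g →ₗ[k] End k g) (.linearMap (LinearMap.fst k g g))
    (.linearMap (LinearMap.snd k g g))).isClosed_eq_zero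

lemma isClosed_Cirr : IsClosed[zar k (g × g)] (Cirr k g t) := by
  let _ := zar k (g × g)
  let adPair : g × g →ₗ[k] g →ₗ[k] g × g :=
    (LinearMap.prodEquiv k).toLinearMap ∘ₗ
      LinearMap.prodMap (ad k g : g →ₗ[k] End k g) (ad k g : g →ₗ[k] End k g)
  have hker (z : g × g) : LinearMap.ker (adPair z) = cent k z.1 ⊓ cent k z.2 :=
    LinearMap.ker_prod _ _
  have hopen := isOpen_finrank_ker_le (IsPolyMap.linearMap adPair) (finrank k t)
  have hclosed : IsClosed {z : g × g | finrank k t < finrank k ↥(cent k z.1 ⊓ cent k z.2)} := by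
    refine (congrArg IsClosed (Set.ext fun z => ?_)).mpr hopen.isClosed_compl
    rw [Set.mem_compl_iff, Set.mem_ofPred_eq, Set.mem_ofPred_eq, hker, not_le]
  exact isClosed_commSet.inter hclosed

lemma isOpen_finrank_engel_fst_le (n : ℕ) :
    IsOpen[zar k (g × g)] {z | finrank k (engel k z.1) ≤ n} :=
  let _ := zar k g
  let _ := zar k (g × g)
  (isOpen_finrank_engel_le n).preimage (IsPolyMap.linearMap (LinearMap.fst k g g)).continuous

namespace RootVectors
variable {ι : Type*} [Fintype ι] (R : RootVectors t ι) (i : ι)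

variable [CharZero k]

lemma finrank_lt_finrank_cent_inf_cent {c d : t} (hc : R.root i c = 0) (hd : R.root i d = 0) :
    finrank k t < finrank k ↥(cent k (c : g) ⊓ cent k (d : g)) := by
  have hvec {h : t} (hh : R.root i h = 0) : ⁅(h : g), R.vec i⁆ = 0 := by
    rw [R.lie_vec, hh, zero_smul]
  refine Submodule.finrank_lt_finrank_of_lt (s := t.toSubmodule) ⟨fun x hx => ?_, fun hle => ?_⟩
  · exact ⟨R.lie_cartan c ⟨x, hx⟩, R.lie_cartan d ⟨x, hx⟩⟩
  · exact R.vec_notMem_cartan i (hle ⟨hvec hc, hvec hd⟩)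

lemma adTranslates_ker_subset_Cirr :
    adTranslates k g ((R.ker i : Set g) ×ˢ (R.ker i : Set g)) ⊆ Cirr k g t := by
  rintro _ ⟨u, hu, ⟨_, _⟩, ⟨⟨c, hc, rfl⟩, ⟨d, hd, rfl⟩⟩, rfl⟩
  have hcomm : ⁅(u : End k g) c, (u : End k g) d⁆ = 0 := by
    rw [← adjointGroup_lie hu, R.lie_cartan, map_zero]
  refine ⟨hcomm, (R.finrank_lt_finrank_cent_inf_cent i hc hd).trans_le ?_⟩
  rw [← finrank_map_adjointGroup hu]
  exact Submodule.finrank_mono (map_cent_inf_cent_le hu _ _)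

lemma component_subset_Cirr : R.component i ⊆ Cirr k g t :=
  @closure_minimal _ (zar k (g × g)) _ _ (R.adTranslates_ker_subset_Cirr i) isClosed_Cirr

variable [IsAlgClosed k]

lemma exists_mem_component_finrank_engel_le :
    ∃ z ∈ R.component i, finrank k (engel k z.1) ≤ finrank k t + 2 := by
  let _ := zar k (g × g)
  obtain ⟨c, hc, hother⟩ := R.exists_root_eq_zero_forall_root_ne_zero i
  have hroots : {j | R.root j c = 0} ⊆ {i, R.neg i} := fun j hj => by
    by_contra h
    exact hother j (fun hji => h (.inl hji)) (fun hji => h (.inr hji)) hj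
  refine ⟨(c, c), subset_closure ⟨1, one_mem _, (c, c), ⟨⟨c, hc, rfl⟩, ⟨c, hc, rfl⟩⟩, rfl⟩, ?_⟩
  rw [R.finrank_engel]
  gcongr
  exact (Set.ncard_le_ncard hroots).trans (Set.ncard_pair (R.neg_ne i).symm).le

lemma subset_compl_or_exists_subset_component (hred : radical k g = center k g)
    {Z : Set (g × g)} (hZ : Z ⊆ Cirr k g t) (hirr : @IsIrreducible _ (zar k (g × g)) Z) :
    Z ⊆ {z | finrank k (engel k z.1) ≤ finrank k t + 2}ᶜ ∨ ∃ j, Z ⊆ R.component j := by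
  classical
  let _ := zar k (g × g)
  set U : Set (g × g) := {z | finrank k (engel k z.1) ≤ finrank k t + 2}
  have hclosed : ∀ Y ∈ insert Uᶜ (Finset.univ.image fun j => R.component j), IsClosed Y := by
    simpa using ⟨isOpen_finrank_engel_fst_le _, fun j => R.isClosed_component j⟩
  have hcover : Z ⊆ ⋃₀ ↑(insert Uᶜ (Finset.univ.image fun j => R.component j)) := fun z hz => by
    by_cases hzU : z ∈ U
    · obtain ⟨j, hj⟩ := exists_mem_adTranslates_kerRoot hred R (hZ hz) hzU
      exact ⟨R.component j, by simp, subset_closure hj⟩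
    · exact ⟨Uᶜ, by simp, hzU⟩
  obtain ⟨Y, hY, hZY⟩ := isIrreducible_iff_sUnion_isClosed.mp hirr _ hclosed hcover
  rcases Finset.mem_insert.mp hY with rfl | hY
  · exact .inl hZY
  · obtain ⟨j, -, rfl⟩ := Finset.mem_image.mp hY
    exact .inr ⟨j, hZY⟩

lemma eq_component_of_subset (hred : radical k g = center k g) {Z : Set (g × g)}
    (hiZ : R.component i ⊆ Z) (hZ : Z ⊆ Cirr k g t)
    (hirr : @IsIrreducible _ (zar k (g × g)) Z) : Z = R.component i := by
  rcases R.subset_compl_or_exists_subset_component hred hZ hirr with hZU | ⟨j, hZj⟩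
  · obtain ⟨z, hz, hzU⟩ := R.exists_mem_component_finrank_engel_le i
    exact absurd hzU (hZU (hiZ hz))
  · have hdim : finrank k (R.SweepDomain j) = finrank k (R.SweepDomain i) :=
      Nat.add_right_cancel ((R.finrank_sweepDomain_add_four j).trans
        (R.finrank_sweepDomain_add_four i).symm)
    have hij : R.component i = R.component j :=
      eq_of_subset_of_dimSet_eq (R.isClosed_component i) (R.isClosed_component j)
        (R.isIrreducible_component j) (hiZ.trans hZj) (R.dimSet_component i)
        (hdim ▸ R.dimSet_component j)
    exact subset_antisymm (hij ▸ hZj) hiZ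

lemma dimSet_component_add_four : dimSet k (g × g) (R.component i) + 4 =
    (((finrank k g + finrank k t : ℕ) : ℕ∞) : WithBot ℕ∞) := by
  rw [dimSet_component, ← R.finrank_sweepDomain_add_four i]
  norm_cast

end CV.RootVectors
end IrregularLocus

/-- The irregular locus of the commuting variety has codimension at most
four:  `dim C^irr ≥ dim C - 4`.  In fact, for a Cartan subalgebra `t` of `g` and any root
`α` of `g` with respect to `t`, the (Zariski) closure of the union of the adjoint-group
translates of `Ker α × Ker α ⊆ t × t` is an irreducible component of `C^irr` of dimension
exactly `dim g + rk g - 4`. -/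
theorem irregular_codim_le_four
    (hred : LieAlgebra.radical k g = LieAlgebra.center k g) (hnc : ¬IsLieAbelian g)
    (t : LieSubalgebra k g) (ht : t.IsCartanSubalgebra)
    (α : Module.Dual k ↥t) (hα : IsRootOf k g t α) :
    (((Module.finrank k g + Module.finrank k ↥t : ℕ) : ℕ∞) : WithBot ℕ∞)
        ≤ CV.dimSet k (g × g) (Cirr k g t) + 4 ∧
      ∀ Z : Set (g × g),
        Z = @closure (g × g) (CV.zar k (g × g))
              (adTranslates k g
                ((↑(kerRoot k g t α) : Set g) ×ˢ (↑(kerRoot k g t α) : Set g))) →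
        Z ⊆ Cirr k g t ∧
          @IsIrreducible (g × g) (CV.zar k (g × g)) Z ∧
          (∀ Z' : Set (g × g), Z ⊆ Z' → Z' ⊆ Cirr k g t →
            @IsIrreducible (g × g) (CV.zar k (g × g)) Z' → Z' = Z) ∧
          CV.dimSet k (g × g) Z + 4
            = (((Module.finrank k g + Module.finrank k ↥t : ℕ) : ℕ∞) : WithBot ℕ∞) := by
  obtain ⟨_, _, ⟨R⟩⟩ := CV.exists_rootVectors hred ht
  obtain ⟨i, rfl⟩ := R.exists_root_eq_of_isRootOf hα
  constructor
  · rw [← R.dimSet_component_add_four i]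
    gcongr
    exact CV.dimSet_mono (R.component_subset_Cirr i)
  · rintro _ rfl
    exact ⟨R.component_subset_Cirr i, R.isIrreducible_component i,
      fun _ => R.eq_component_of_subset i hred, R.dimSet_component_add_four i⟩
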